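/- arXiv:1907.00632 — 3 statements merged into one kernel-verified Lean document; each statement's English description precedes it below -/
import Mathlib

section
/- For every n ≥ 1, the variance of the number of blocks X_n of a uniformly random non-crossing partition of [n] equals (n² − 1)/(4(2n − 1)); that is, as rational numbers, (1/C_n)·Σ_{π ∈ NC(n)} (#blocks(π))² − ((n+1)/2)² = (n² − 1)/(4(2n − 1)). -/
/-- A finite partition of `Fin n` (representing `[n] = {1, …, n}`) is *non-crossing* if
there are no indices `a < b < c < d` with `a, c` in one block and `b, d` in a
different block. -/
def IsNonCrossing {n : ℕ} (P : Finpartition (Finset.univ : Finset (Fin n))) : Prop :=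
  ∀ a b c d : Fin n, a < b → b < c → c < d →
    ∀ B ∈ P.parts, ∀ B' ∈ P.parts,
      a ∈ B → c ∈ B → b ∈ B' → d ∈ B' → B = B'

/-- The type of non-crossing partitions of `[n]`. -/
def NCPart (n : ℕ) : Type :=
  {P : Finpartition (Finset.univ : Finset (Fin n)) // IsNonCrossing P}

noncomputable instance (n : ℕ) : Fintype (NCPart n) :=
  Fintype.ofInjective (fun P => P.1.parts)
    (fun _ _ h => Subtype.ext (Finpartition.ext h))

/-- The number of blocks of a non-crossing partition. -/
def numBlocks {n : ℕ} (P : NCPart n) : ℕ := P.1.parts.card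

/-- The number of blocks of size `l` of a non-crossing partition. -/
def numBlocksOfSize {n : ℕ} (l : ℕ) (P : NCPart n) : ℕ :=
  (P.1.parts.filter fun B => B.card = l).card

/-!
Let `j` be the least element of the block of the last point of `[n + 1]`. Removing that point splits
a non-crossing partition into non-crossing partitions of the `j` points below `j` and of the other
`n - j` points, and all choices occur; a block is lost only if the last point is a singleton. Hence
the Narayana polynomials satisfy `N (n + 1) = ∑ N j * N (n - j) + (t - 1) * N n`. Differentiating
at `t = 1` gives linear equations, with coefficient `√(1 - 4X) = 1 - 2X * C(X)`, for the generating
functions of the factorial moments. In terms of `c = 1 / √(1 - 4X)`, which satisfies `c' = 2c³`, the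
first one is `(c - 1) / 2` and the second one is `X² * c'`.
-/

open Finset

namespace NCPart

variable {n : ℕ}

lemma mem_part_iff (P : NCPart n) {i j : Fin n} : j ∈ P.1.part i ↔ P.1.part j = P.1.part i :=
  P.1.mem_part_iff_part_eq_part (mem_univ j) (mem_univ i)

lemma parts_eq_image_part (P : NCPart n) : P.1.parts = univ.image P.1.part := by
  ext B
  simp only [mem_image, mem_univ, true_and]
  constructor
  · intro hB
    obtain ⟨i, hi⟩ := P.1.nonempty_of_mem_parts hB
    exact ⟨i, P.1.part_eq_of_mem hB hi⟩
  · rintro ⟨i, rfl⟩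
    exact P.1.part_mem.2 (mem_univ i)

lemma ext_part {P Q : NCPart n} (h : P.1.part = Q.1.part) : P = Q :=
  Subtype.ext <| Finpartition.ext <| by rw [parts_eq_image_part, parts_eq_image_part, h]

/-- The least element of the block containing `i`. -/
def blockMin (P : NCPart n) (i : Fin n) : Fin n :=
  (P.1.part i).min' ⟨i, P.1.mem_part (mem_univ i)⟩

lemma blockMin_le_of_mem_part (P : NCPart n) {i j : Fin n} (h : j ∈ P.1.part i) :
    P.blockMin i ≤ j :=
  min'_le _ _ h

lemma blockMin_le (P : NCPart n) (i : Fin n) : P.blockMin i ≤ i :=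
  P.blockMin_le_of_mem_part (P.1.mem_part (mem_univ i))

lemma part_blockMin (P : NCPart n) (i : Fin n) : P.1.part (P.blockMin i) = P.1.part i :=
  P.mem_part_iff.1 (min'_mem _ _)

lemma blockMin_eq_iff (P : NCPart n) {i j : Fin n} :
    P.blockMin i = P.blockMin j ↔ P.1.part i = P.1.part j :=
  ⟨fun h ↦ by rw [← P.part_blockMin i, h, part_blockMin], fun h ↦ by simp only [blockMin, h]⟩

lemma blockMin_le_blockMin (P : NCPart n) {a b : Fin n} (hba : P.blockMin b ≤ a) (hab : a ≤ b) :
    P.blockMin b ≤ P.blockMin a := by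
  rcases hab.eq_or_lt with rfl | hab
  · exact le_rfl
  rcases hba.eq_or_lt with rfl | hba
  · exact (P.blockMin_eq_iff.2 (P.part_blockMin b)).ge
  by_contra! hlt
  have same_part : P.1.part a = P.1.part b :=
    P.2 _ _ a b hlt hba hab _ (P.1.part_mem.2 (mem_univ a)) _ (P.1.part_mem.2 (mem_univ b))
      (P.mem_part_iff.2 (P.part_blockMin a)) (P.1.mem_part (mem_univ a))
      (P.mem_part_iff.2 (P.part_blockMin b)) (P.1.mem_part (mem_univ b))
  exact hlt.ne (P.blockMin_eq_iff.2 same_part)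

lemma numBlocks_eq_card_blockMin_eq (P : NCPart n) :
    numBlocks P = #{i | P.blockMin i = i} := by
  have parts_eq : P.1.parts = ({i | P.blockMin i = i} : Finset (Fin n)).image P.1.part := by
    rw [parts_eq_image_part]
    refine Subset.antisymm (image_subset_iff.2 fun i _ ↦ ?_) (image_subset_image (subset_univ _))
    refine mem_image.2 ⟨P.blockMin i, ?_, P.part_blockMin i⟩
    simpa only [mem_filter_univ] using P.blockMin_eq_iff.2 (P.part_blockMin i)
  rw [numBlocks, parts_eq, card_image_of_injOn]
  intro i hi j hj hij
  simp only [coe_filter, mem_univ, true_and, Set.mem_ofPred_eq] at hi hj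
  rw [← hi, ← hj, P.blockMin_eq_iff.2 hij]

end NCPart

/-- The functions on `{0, …, n - 1}` that arise by sending each point to the least element of its
block in a non-crossing partition. They are extended by `0` to all of `ℕ`, so that they can be cut
and glued without changing their domain. -/
@[ext]
structure BlockMinFun (n : ℕ) where
  toFun : ℕ → ℕ
  map_of_le : ∀ i, n ≤ i → toFun i = 0
  map_le : ∀ i, toFun i ≤ i
  map_le_map : ∀ a b, toFun b ≤ a → a ≤ b → toFun b ≤ toFun a

namespace BlockMinFun

variable {n : ℕ}

instance : CoeFun (BlockMinFun n) fun _ ↦ ℕ → ℕ := ⟨toFun⟩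

lemma map_map (f : BlockMinFun n) (i : ℕ) : f (f i) = f i :=
  (f.map_le (f i)).antisymm (f.map_le_map (f i) i le_rfl (f.map_le i))

/-- The block-minimum function of a non-crossing partition. -/
def ofNCPart (P : NCPart n) : BlockMinFun n where
  toFun i := if h : i < n then P.blockMin ⟨i, h⟩ else 0
  map_of_le i hi := dif_neg hi.not_gt
  map_le i := by
    split_ifs with hi
    · exact P.blockMin_le ⟨i, hi⟩
    · exact i.zero_le
  map_le_map a b hba hab := by
    by_cases hb : b < n
    · have ha : a < n := hab.trans_lt hb
      simp only [hb, ha, dite_true] at hba ⊢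
      exact P.blockMin_le_blockMin (a := ⟨a, ha⟩) (b := ⟨b, hb⟩) hba hab
    · simp only [hb, dite_false, zero_le]

lemma ofNCPart_coe (P : NCPart n) (i : Fin n) : ofNCPart P i = P.blockMin i :=
  dif_pos i.isLt

instance (f : BlockMinFun n) : DecidableRel (Setoid.ker fun i : Fin n ↦ f i) :=
  fun i j ↦ inferInstanceAs (Decidable (f i = f j))

/-- The partition of `{0, …, n - 1}` into the fibres of `f`. -/
def fiberPartition (f : BlockMinFun n) : Finpartition (univ : Finset (Fin n)) :=
  Finpartition.ofSetoid (Setoid.ker fun i : Fin n ↦ f i)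

lemma mem_part_fiberPartition (f : BlockMinFun n) {i j : Fin n} :
    j ∈ f.fiberPartition.part i ↔ f i = f j :=
  Finpartition.mem_part_ofSetoid_iff_rel

lemma isNonCrossing_fiberPartition (f : BlockMinFun n) : IsNonCrossing f.fiberPartition := by
  intro a b c d hab hbc hcd B hB B' hB' ha hc hb hd
  have hac : f a = f c :=
    f.mem_part_fiberPartition.1 ((f.fiberPartition.part_eq_of_mem hB ha).symm ▸ hc)
  have hbd : f b = f d :=
    f.mem_part_fiberPartition.1 ((f.fiberPartition.part_eq_of_mem hB' hb).symm ▸ hd)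
  have hcb : f c ≤ f b := f.map_le_map b c (hac ▸ (f.map_le a).trans hab.le) hbc.le
  have hdc : f d ≤ f c := f.map_le_map c d (hbd ▸ (f.map_le b).trans hbc.le) hcd.le
  have hfab : f a = f b := by omega
  exact f.fiberPartition.eq_of_mem_parts hB hB'
    (f.fiberPartition.part_eq_of_mem hB ha ▸ f.mem_part_fiberPartition.2 hfab) hb

/-- The non-crossing partition whose blocks are the fibres of `f`. -/
def toNCPart (f : BlockMinFun n) : NCPart n :=
  ⟨f.fiberPartition, f.isNonCrossing_fiberPartition⟩

lemma blockMin_toNCPart (f : BlockMinFun n) (i : Fin n) : (f.toNCPart.blockMin i : ℕ) = f i := by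
  have hlt : f i < n := (f.map_le i).trans_lt i.isLt
  apply le_antisymm
  · exact f.toNCPart.blockMin_le_of_mem_part (j := ⟨f i, hlt⟩)
      (f.mem_part_fiberPartition.2 (f.map_map i).symm)
  · have hmin : f i = f (f.toNCPart.blockMin i) :=
      f.mem_part_fiberPartition.1 (f.toNCPart.mem_part_iff.2 (f.toNCPart.part_blockMin i))
    exact hmin.trans_le (f.map_le _)

end BlockMinFun

/-- Non-crossing partitions correspond to their block-minimum functions. -/
def NCPart.equivBlockMinFun (n : ℕ) : NCPart n ≃ BlockMinFun n where
  toFun := BlockMinFun.ofNCPart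
  invFun := BlockMinFun.toNCPart
  left_inv P := by
    refine NCPart.ext_part (funext fun i ↦ Finset.ext fun j ↦ ?_)
    rw [P.mem_part_iff, ← P.blockMin_eq_iff]
    refine (BlockMinFun.mem_part_fiberPartition _).trans ?_
    rw [BlockMinFun.ofNCPart_coe, BlockMinFun.ofNCPart_coe, Fin.val_inj, eq_comm]
  right_inv f := by
    ext i
    by_cases hi : i < n
    · exact (BlockMinFun.ofNCPart_coe _ ⟨i, hi⟩).trans (f.blockMin_toNCPart ⟨i, hi⟩)
    · rw [BlockMinFun.map_of_le _ i (not_lt.1 hi), f.map_of_le i (not_lt.1 hi)]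

namespace BlockMinFun

noncomputable instance (n : ℕ) : Fintype (BlockMinFun n) :=
  Fintype.ofEquiv (NCPart n) (NCPart.equivBlockMinFun n)

/-- The number of fixed points of `f` below `n`, that is, of blocks of the associated partition. -/
def numFixed {n : ℕ} (f : BlockMinFun n) : ℕ := #{i ∈ range n | f i = i}

lemma numFixed_equivBlockMinFun {n : ℕ} (P : NCPart n) :
    (NCPart.equivBlockMinFun n P).numFixed = numBlocks P := by
  rw [P.numBlocks_eq_card_blockMin_eq, numFixed, card_filter, card_filter, sum_range]
  refine sum_congr rfl fun i _ ↦ ?_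
  congr 1
  rw [← Fin.val_inj, ← ofNCPart_coe]
  rfl

variable {j k : ℕ}

/-- The block-minimum function on `{0, …, j + k}` obtained by placing `h` above `g` and adding
`j + k` to the block of `j` (a block of its own if `k = 0`). The value at `j + k` needs no separate
case, because `h k = 0`. -/
def glue (g : BlockMinFun j) (h : BlockMinFun k) : BlockMinFun (j + k + 1) where
  toFun i := if i < j then g i else if i ≤ j + k then j + h (i - j) else 0
  map_of_le i hi := by rw [if_neg (by omega), if_neg (by omega)]
  map_le i := by
    have := g.map_le i
    have := h.map_le (i - j)
    split_ifs <;> omega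
  map_le_map a b hba hab := by
    have := g.map_le_map a b
    have := h.map_le_map (a - j) (b - j)
    split_ifs at hba ⊢ <;> omega

/-- The restriction of `f` to `{0, …, j - 1}`. -/
def lower (j : ℕ) (f : BlockMinFun n) : BlockMinFun j where
  toFun i := if i < j then f i else 0
  map_of_le i hi := if_neg hi.not_gt
  map_le i := by
    have := f.map_le i
    split_ifs <;> omega
  map_le_map a b hba hab := by
    have := f.map_le_map a b
    split_ifs at hba ⊢ <;> omega

/-- The restriction of `f` to `{j, …, j + k - 1}`, shifted down by `j`. -/
def upper (j k : ℕ) (f : BlockMinFun n) : BlockMinFun k where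
  toFun i := if i < k then f (j + i) - j else 0
  map_of_le i hi := if_neg hi.not_gt
  map_le i := by
    have := f.map_le (j + i)
    split_ifs <;> omega
  map_le_map a b hba hab := by
    have := f.map_le_map (j + a) (j + b)
    split_ifs at hba ⊢ <;> omega

lemma glue_last (g : BlockMinFun j) (h : BlockMinFun k) : glue g h (j + k) = j := by
  simp [glue, h.map_of_le]

lemma lower_glue (g : BlockMinFun j) (h : BlockMinFun k) : (glue g h).lower j = g := by
  ext i
  have := g.map_of_le i
  simp only [lower, glue]
  split_ifs <;> omega

lemma upper_glue (g : BlockMinFun j) (h : BlockMinFun k) : (glue g h).upper j k = h := by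
  ext i
  have := h.map_of_le i
  simp only [upper, glue, add_tsub_cancel_left]
  split_ifs <;> omega

lemma glue_lower_upper (f : BlockMinFun (j + k + 1)) (hf : f (j + k) = j) :
    glue (f.lower j) (f.upper j k) = f := by
  ext i
  simp only [glue, lower, upper]
  split_ifs with hij hik hk
  · rfl
  · have := f.map_le_map i (j + k) (by omega) hik
    rw [Nat.add_sub_cancel' (not_lt.1 hij)]
    omega
  · rw [add_zero, show i = j + k by omega, hf]
  · exact (f.map_of_le i (by omega)).symm

/-- Decomposition of a block-minimum function according to its value at the last point. -/
def glueEquiv (j k : ℕ) :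
    BlockMinFun j × BlockMinFun k ≃ {f : BlockMinFun (j + k + 1) // f (j + k) = j} where
  toFun gh := ⟨glue gh.1 gh.2, glue_last gh.1 gh.2⟩
  invFun f := (f.1.lower j, f.1.upper j k)
  left_inv gh := Prod.ext (lower_glue gh.1 gh.2) (upper_glue gh.1 gh.2)
  right_inv f := Subtype.ext (glue_lower_upper f.1 f.2)

lemma numFixed_glue (g : BlockMinFun j) (h : BlockMinFun k) :
    (glue g h).numFixed = g.numFixed + h.numFixed + if k = 0 then 1 else 0 := by
  simp only [numFixed, card_filter, sum_range_succ, sum_range_add]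
  congr 1
  · congr 1 <;> refine sum_congr rfl fun i hi ↦ ?_ <;> rw [mem_range] at hi
    · simp [glue, hi]
    · simp [glue, hi.le]
  · simp [glue_last]

lemma sum_numFixed_succ {M : Type*} [AddCommMonoid M] (φ : ℕ → M) (n : ℕ) :
    ∑ f : BlockMinFun (n + 1), φ f.numFixed =
      ∑ p ∈ antidiagonal n, ∑ g : BlockMinFun p.1, ∑ h : BlockMinFun p.2,
        φ (g.numFixed + h.numFixed + if p.2 = 0 then 1 else 0) := by
  have last_mem (f : BlockMinFun (n + 1)) : (f n, n - f n) ∈ antidiagonal n := by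
    rw [HasAntidiagonal.mem_antidiagonal, Nat.add_sub_cancel' (f.map_le n)]
  rw [← sum_fiberwise_of_maps_to (fun f _ ↦ last_mem f)]
  refine sum_congr rfl ?_
  rintro ⟨j, k⟩ hp
  obtain rfl : j + k = n := HasAntidiagonal.mem_antidiagonal.1 hp
  have fiber (f : BlockMinFun (j + k + 1)) :
      f ∈ ({f | (f (j + k), j + k - f (j + k)) = (j, k)} : Finset (BlockMinFun (j + k + 1))) ↔
        f (j + k) = j := by
    rw [mem_filter_univ, Prod.mk_inj]
    omega
  rw [sum_subtype _ fiber, ← (glueEquiv j k).sum_comp, Fintype.sum_prod_type]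
  simp only [glueEquiv, Equiv.coe_fn_mk, numFixed_glue]

end BlockMinFun

/-- The Narayana polynomial of `n` at `t`, in which each non-crossing partition of `[n]` is
weighted by `t` to the number of its blocks. -/
noncomputable def narayana {R : Type*} [CommSemiring R] (t : R) (n : ℕ) : R :=
  ∑ π : NCPart n, t ^ numBlocks π

lemma narayana_eq_sum_numFixed {R : Type*} [CommSemiring R] (t : R) (n : ℕ) :
    narayana t n = ∑ f : BlockMinFun n, t ^ f.numFixed :=
  Fintype.sum_equiv (NCPart.equivBlockMinFun n) _ _ fun π ↦ by
    rw [BlockMinFun.numFixed_equivBlockMinFun]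

lemma narayana_zero {R : Type*} [CommSemiring R] (t : R) : narayana t 0 = 1 := by
  let : Unique (NCPart 0) :=
    { default := ⟨⊥, fun a ↦ a.elim0⟩
      uniq := fun _ ↦ NCPart.ext_part (funext fun i ↦ i.elim0) }
  simp [narayana, numBlocks, NCPart.parts_eq_image_part]

lemma narayana_succ {R : Type*} [CommRing R] (t : R) (n : ℕ) :
    narayana t (n + 1) =
      ∑ p ∈ antidiagonal n, narayana t p.1 * narayana t p.2 + (t - 1) * narayana t n := by
  have factor (p : ℕ × ℕ) :
      ∑ g : BlockMinFun p.1, ∑ h : BlockMinFun p.2,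
          t ^ (g.numFixed + h.numFixed + if p.2 = 0 then 1 else 0) =
        narayana t p.1 * narayana t p.2 +
          if p.2 = 0 then (t - 1) * narayana t p.1 * narayana t p.2 else 0 := by
    simp only [pow_add, ← sum_mul, ← mul_sum, ← narayana_eq_sum_numFixed]
    split_ifs <;> ring
  rw [narayana_eq_sum_numFixed, BlockMinFun.sum_numFixed_succ (t ^ ·)]
  simp only [factor, sum_add_distrib]
  rw [← sum_filter, HasAntidiagonal.filter_snd_eq_antidiagonal n 0, if_pos n.zero_le, sum_singleton,
    narayana_zero, mul_one, Nat.sub_zero]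

/-- The total `r`-th factorial moment `∑ X (X - 1) ⋯ (X - r + 1)` of the number of blocks `X`, over
all non-crossing partitions of `[n]`. -/
noncomputable def factorialMoment (r n : ℕ) : ℚ :=
  ∑ π : NCPart n, ((numBlocks π).descFactorial r : ℚ)

lemma factorialMoment_eq_eval_narayana (r n : ℕ) :
    factorialMoment r n =
      (Polynomial.derivative^[r] (narayana (Polynomial.X : Polynomial ℚ) n)).eval 1 := by
  simp [factorialMoment, narayana, Polynomial.iterate_derivative_sum, Polynomial.eval_finsetSum,
    Polynomial.iterate_derivative_X_pow_eq_natCast_mul]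

lemma factorialMoment_apply_zero (r : ℕ) : factorialMoment r 0 = if r = 0 then 1 else 0 := by
  rw [factorialMoment_eq_eval_narayana, narayana_zero]
  cases r <;> simp

lemma factorialMoment_succ (r n : ℕ) :
    factorialMoment r (n + 1) =
      ∑ p ∈ antidiagonal n, ∑ k ∈ range (r + 1),
          (r.choose k : ℚ) * (factorialMoment (r - k) p.1 * factorialMoment k p.2) +
        r * factorialMoment (r - 1) n := by
  simp only [factorialMoment_eq_eval_narayana, narayana_succ, sub_mul, one_mul,
    mul_comm Polynomial.X, iterate_map_add, Polynomial.iterate_derivative_sub,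
    Polynomial.iterate_derivative_sum, Polynomial.iterate_derivative_mul_X]
  simp [Polynomial.iterate_derivative_mul, Polynomial.eval_finsetSum]

lemma sum_numBlocks_sq (n : ℕ) :
    ∑ π : NCPart n, (numBlocks π : ℚ) ^ 2 = factorialMoment 2 n + factorialMoment 1 n := by
  rw [factorialMoment, factorialMoment, ← sum_add_distrib]
  refine sum_congr rfl fun π _ ↦ ?_
  rw [Nat.cast_descFactorial_two, Nat.descFactorial_one]
  ring

lemma card_NCPart (n : ℕ) : Fintype.card (NCPart n) = catalan n := by
  have card_eq (m : ℕ) : (Fintype.card (NCPart m) : ℚ) = factorialMoment 0 m := by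
    simp [factorialMoment]
  induction n using Nat.strong_induction_on with
  | _ n ih =>
    rw [← Nat.cast_inj (R := ℚ), card_eq]
    cases n with
    | zero => simp [factorialMoment_apply_zero]
    | succ n =>
      rw [factorialMoment_succ, catalan_succ']
      push_cast
      simp only [range_one, sum_singleton, Nat.choose_self, Nat.cast_one, one_mul, zero_mul,
        add_zero, Nat.sub_zero, ← card_eq]
      refine sum_congr rfl fun p hp ↦ ?_
      have hp' := HasAntidiagonal.mem_antidiagonal.1 hp
      rw [ih p.1 (by omega), ih p.2 (by omega)]

section GeneratingFunctions

open PowerSeries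

instance : CharZero ℚ⟦X⟧ := algebraRat.charZero ℚ⟦X⟧

/-- The power series `√(1 - 4X)`, obtained from the Catalan generating function
`(1 - √(1 - 4X)) / (2X)`. -/
noncomputable def sqrtSeries : ℚ⟦X⟧ := 1 - 2 * (X * catalanSeries.map (Nat.castRingHom ℚ))

/-- The generating function of the central binomial coefficients, equal to `1 / √(1 - 4X)`. -/
def centralBinomSeries : ℚ⟦X⟧ := .mk fun n ↦ (n.centralBinom : ℚ)

lemma sqrtSeries_sq : sqrtSeries ^ 2 = 1 - 4 * X := by
  have h := congrArg (map (Nat.castRingHom ℚ)) catalanSeries_sq_mul_X_add_one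
  rw [map_add, map_mul, map_pow, map_one, map_X] at h
  rw [sqrtSeries]
  linear_combination 4 * X * h

lemma derivative_sqrtSeries : d⁄dX ℚ sqrtSeries = -2 * centralBinomSeries := by
  have two_eq : (2 : ℚ⟦X⟧) = C (2 : ℚ) := (map_ofNat C 2).symm
  ext n
  have centralBinom_eq : (n.centralBinom : ℚ) = (n + 1) * catalan n :=
    mod_cast (succ_mul_catalan_eq_centralBinom n).symm
  rw [coeff_derivative, sqrtSeries, map_sub, two_eq, neg_mul, map_neg, coeff_C_mul, coeff_C_mul,
    coeff_succ_X_mul, coeff_one, if_neg n.succ_ne_zero, coeff_map, catalanSeries_coeff,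
    centralBinomSeries, coeff_mk, centralBinom_eq, eq_natCast]
  ring

lemma sqrtSeries_mul_centralBinomSeries : sqrtSeries * centralBinomSeries = 1 := by
  have four_eq : (4 : ℚ⟦X⟧) = C (4 : ℚ) := (map_ofNat C 4).symm
  have h := congrArg (d⁄dX ℚ) sqrtSeries_sq
  rw [derivative_pow, derivative_sqrtSeries, map_sub, derivative_one, Derivation.leibniz,
    derivative_X, four_eq, derivative_C, ← four_eq, smul_zero, smul_eq_mul] at h
  refine mul_left_cancel₀ (OfNat.ofNat_ne_zero 4 : (4 : ℚ⟦X⟧) ≠ 0) ?_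
  push_cast at h
  linear_combination -h

lemma derivative_centralBinomSeries : d⁄dX ℚ centralBinomSeries = 2 * centralBinomSeries ^ 3 := by
  have h := congrArg (d⁄dX ℚ) sqrtSeries_mul_centralBinomSeries
  rw [derivative_one, Derivation.leibniz, derivative_sqrtSeries, smul_eq_mul, smul_eq_mul] at h
  linear_combination centralBinomSeries * h -
    d⁄dX ℚ centralBinomSeries * sqrtSeries_mul_centralBinomSeries

lemma centralBinomSeries_sq_sub_one :
    centralBinomSeries ^ 2 - 1 = 4 * X * centralBinomSeries ^ 2 := by
  linear_combination (sqrtSeries * centralBinomSeries + 1) * sqrtSeries_mul_centralBinomSeries -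
    centralBinomSeries ^ 2 * sqrtSeries_sq

/-- The generating function `∑ₙ factorialMoment r n Xⁿ`. -/
noncomputable def momentSeries (r : ℕ) : ℚ⟦X⟧ := .mk (factorialMoment r)

lemma momentSeries_eq (r : ℕ) :
    momentSeries r = C (if r = 0 then 1 else 0) +
      X * (∑ k ∈ range (r + 1), r.choose k • (momentSeries (r - k) * momentSeries k) +
        r • momentSeries (r - 1)) := by
  ext n
  cases n with
  | zero => simp [momentSeries, factorialMoment_apply_zero]
  | succ n =>
    rw [map_add, coeff_succ_X_mul, coeff_succ_C, zero_add, map_add, map_sum]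
    simp_rw [map_nsmul, coeff_mul, momentSeries, coeff_mk, factorialMoment_succ, nsmul_eq_mul,
      mul_sum]
    rw [sum_comm]

lemma sqrtSeries_eq : sqrtSeries = 1 - 2 * (X * momentSeries 0) := by
  have momentSeries_zero : momentSeries 0 = catalanSeries.map (Nat.castRingHom ℚ) := by
    ext n
    simp [momentSeries, factorialMoment, card_NCPart]
  rw [sqrtSeries, momentSeries_zero]

lemma two_mul_momentSeries_one : 2 * momentSeries 1 = centralBinomSeries - 1 := by
  have functional_eq :
      momentSeries 1 = X * (2 * (momentSeries 0 * momentSeries 1) + momentSeries 0) := by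
    conv_lhs => rw [momentSeries_eq]
    simp only [one_ne_zero, if_false, map_zero, Nat.reduceAdd, nsmul_eq_mul, sum_range_succ,
      range_one, sum_singleton, Nat.choose_succ_self_right, Nat.choose_self, Nat.cast_one, zero_add,
      one_mul, tsub_zero, tsub_self]
    ring
  have h : 2 * momentSeries 1 * sqrtSeries = 1 - sqrtSeries := by
    rw [sqrtSeries_eq]
    linear_combination 2 * functional_eq
  linear_combination centralBinomSeries * h -
    (2 * momentSeries 1 + 1) * sqrtSeries_mul_centralBinomSeries

lemma momentSeries_two : momentSeries 2 = X * (X * d⁄dX ℚ centralBinomSeries) := by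
  have functional_eq : momentSeries 2 =
      2 * X * (momentSeries 0 * momentSeries 2 + momentSeries 1 ^ 2 + momentSeries 1) := by
    conv_lhs => rw [momentSeries_eq]
    simp only [OfNat.ofNat_ne_zero, if_false, map_zero, Nat.reduceAdd, nsmul_eq_mul, sum_range_succ,
      range_one, sum_singleton, Nat.choose_zero_right, Nat.choose_succ_self_right, Nat.choose_self,
      Nat.cast_one, Nat.cast_ofNat, zero_add, one_mul, tsub_zero, tsub_self, Nat.add_one_sub_one]
    ring
  have h : 2 * (momentSeries 2 * sqrtSeries) = X * (centralBinomSeries ^ 2 - 1) := by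
    rw [sqrtSeries_eq]
    linear_combination 2 * functional_eq +
      X * (2 * momentSeries 1 + centralBinomSeries + 1) * two_mul_momentSeries_one
  rw [centralBinomSeries_sq_sub_one] at h
  refine mul_left_cancel₀ (two_ne_zero (α := ℚ⟦X⟧)) ?_
  linear_combination centralBinomSeries * h - 2 * X ^ 2 * derivative_centralBinomSeries -
    2 * momentSeries 2 * sqrtSeries_mul_centralBinomSeries

lemma factorialMoment_one_succ (n : ℕ) :
    2 * factorialMoment 1 (n + 1) = (n + 2) * catalan (n + 1) := by
  have h := congrArg (coeff (n + 1)) two_mul_momentSeries_one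
  rw [← map_ofNat C 2, coeff_C_mul, map_sub, coeff_one, if_neg n.succ_ne_zero, sub_zero,
    momentSeries, centralBinomSeries, coeff_mk, coeff_mk] at h
  exact h.trans (mod_cast (succ_mul_catalan_eq_centralBinom (n + 1)).symm)

lemma factorialMoment_two_succ (n : ℕ) :
    2 * (2 * n + 1) * factorialMoment 2 (n + 1) = n * (n + 1) * (n + 2) * catalan (n + 1) := by
  have moment_eq : factorialMoment 2 (n + 1) = n * n.centralBinom := by
    have h := congrArg (coeff (n + 1)) momentSeries_two
    rw [momentSeries, coeff_mk, coeff_succ_X_mul] at h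
    rw [h]
    cases n with
    | zero => rw [coeff_zero_X_mul, Nat.cast_zero, zero_mul]
    | succ n =>
      rw [coeff_succ_X_mul, coeff_derivative, centralBinomSeries, coeff_mk, mul_comm, Nat.cast_succ]
  have centralBinom_succ :
      ((n : ℚ) + 1) * (n + 1).centralBinom = 2 * (2 * n + 1) * n.centralBinom :=
    mod_cast Nat.succ_mul_centralBinom_succ n
  have centralBinom_eq : ((n : ℚ) + 2) * catalan (n + 1) = (n + 1).centralBinom :=
    mod_cast succ_mul_catalan_eq_centralBinom (n + 1)
  rw [moment_eq]
  linear_combination -(n : ℚ) * centralBinom_succ - (n : ℚ) * (n + 1) * centralBinom_eq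

end GeneratingFunctions

lemma catalan_ne_zero (n : ℕ) : catalan n ≠ 0 :=
  right_ne_zero_of_mul (succ_mul_catalan_eq_centralBinom n ▸ n.centralBinom_ne_zero)

/-- For every `n ≥ 1`, the variance of the number of blocks of a uniformly
random non-crossing partition of `[n]` equals `(n² − 1)/(4(2n − 1))`: as rational numbers,
`(1/C_n)·Σ_{π ∈ NC(n)} (#blocks(π))² − ((n+1)/2)² = (n² − 1)/(4(2n − 1))`. -/
theorem variance_numBlocks (n : ℕ) (hn : 1 ≤ n) :
    (∑ π : NCPart n, (numBlocks π : ℚ) ^ 2) / (Fintype.card (NCPart n) : ℚ) -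
      (((n : ℚ) + 1) / 2) ^ 2 =
      ((n : ℚ) ^ 2 - 1) / (4 * (2 * (n : ℚ) - 1)) := by
  obtain ⟨m, rfl⟩ := Nat.exists_eq_add_of_le' hn
  have card_ne_zero : (catalan (m + 1) : ℚ) ≠ 0 := Nat.cast_ne_zero.2 (catalan_ne_zero (m + 1))
  have denom_eq : 2 * ((m : ℚ) + 1) - 1 = 2 * m + 1 := by ring
  have moment_one : factorialMoment 1 (m + 1) = (m + 2) * catalan (m + 1) / 2 := by
    rw [eq_div_iff two_ne_zero, mul_comm, factorialMoment_one_succ]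
  have moment_two : factorialMoment 2 (m + 1) =
      m * (m + 1) * (m + 2) * catalan (m + 1) / (2 * (2 * m + 1)) := by
    rw [eq_div_iff (by positivity), mul_comm, factorialMoment_two_succ]
  rw [sum_numBlocks_sq, card_NCPart, moment_one, moment_two, Nat.cast_succ, denom_eq]
  field_simp
  ring
end

section
/- Central limit theorem for the number of blocks: let X_n be the number of blocks of a uniformly random non-crossing partition of [n], μ_n = (n+1)/2 and σ_n² = (n² − 1)/(4(2n − 1)). Then for every real x, the probability (1/C_n)·#{π ∈ NC(n) : #blocks(π) ≤ μ_n + x·σ_n} converges, as n → ∞, to Φ(x), the cumulative distribution function of the standard Gaussian distribution. -/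
open Filter ProbabilityTheory

/-!
A non-crossing partition is recorded by a path: the minimum of a block lies one step above the point
before it, and every later point of the block returns to the height of the minimum. Blocks are thus
the up-steps of a Łukasiewicz-type path, and the paths with a given number of up-steps are counted
by a two-by-two determinant of binomial coefficients. This gives the Narayana numbers: `n` times the
number of non-crossing partitions with `k + 1` blocks is `n.choose (k + 1) * n.choose k`.

Divided by the square of the central binomial coefficient, this is a product of two quotients that
each tend to a Gaussian profile by de Moivre–Laplace, with a Gaussian bound uniform in `n`. The
distribution function of the number of blocks is an integral of these scaled counts, so it converges
by dominated convergence.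
-/

section Counting

/-- The sequence `v, g 0, g 1, …`. -/
def prepend (v : ℕ) (g : ℕ → ℕ) : ℕ → ℕ
  | 0 => v
  | i + 1 => g i

lemma prepend_injective (v : ℕ) : Function.Injective (prepend v) :=
  fun _ _ h => funext fun i => congrFun h (i + 1)

open Classical in
/-- Łukasiewicz-type paths: sequences starting at `v` that take `m` steps, each either going up by
exactly one or moving to an arbitrary positive value not above the current one. Beyond time `m` the
sequence is padded with zeros, so that distinct paths are distinct functions. -/
noncomputable def heightSeqs : ℕ → ℕ → Finset (ℕ → ℕ)
  | 0, v => {prepend v 0}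
  | m + 1, v => (Finset.Icc 1 (v + 1)).biUnion fun w =>
      (heightSeqs m w).map ⟨prepend v, prepend_injective v⟩

lemma mem_heightSeqs {m v : ℕ} {h : ℕ → ℕ} : h ∈ heightSeqs m v ↔
    h 0 = v ∧ (∀ i < m, 1 ≤ h (i + 1) ∧ h (i + 1) ≤ h i + 1) ∧ ∀ i, m < i → h i = 0 := by
  induction m generalizing v h with
  | zero =>
    rw [heightSeqs, Finset.mem_singleton]
    refine ⟨by rintro rfl; exact ⟨rfl, by simp, fun | _ + 1, _ => rfl⟩, fun ⟨h0, _, hpad⟩ => ?_⟩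
    funext i
    cases i with
    | zero => exact h0
    | succ i => exact hpad _ i.succ_pos
  | succ m ih =>
    simp only [heightSeqs, Finset.mem_biUnion, Finset.mem_map, Function.Embedding.coeFn_mk,
      Finset.mem_Icc, ih]
    constructor
    · rintro ⟨w, hw, g, ⟨rfl, hstep, hpad⟩, rfl⟩
      refine ⟨rfl, ?_, ?_⟩
      · rintro (_ | i) hi
        · exact hw
        · exact hstep i (by omega)
      · rintro (_ | i) hi
        · omega
        · exact hpad i (by omega)
    · rintro ⟨rfl, hstep, hpad⟩
      refine ⟨h 1, hstep 0 m.succ_pos, fun i => h (i + 1),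
        ⟨rfl, fun i hi => hstep (i + 1) (by omega), fun i hi => hpad (i + 1) (by omega)⟩, ?_⟩
      funext i
      cases i <;> rfl

/-- The number of up-steps among the first `m` steps of `h`. -/
def upSteps (m : ℕ) (h : ℕ → ℕ) : ℕ := ((Finset.range m).filter fun i => h (i + 1) = h i + 1).card

lemma upSteps_prepend (m v : ℕ) (g : ℕ → ℕ) :
    upSteps (m + 1) (prepend v g) = upSteps m g + if g 0 = v + 1 then 1 else 0 := by
  simp only [upSteps, Finset.card_filter, Finset.sum_range_succ' _ m]
  rfl

/-- The number of paths in `heightSeqs m v` with `k` up-steps. -/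
noncomputable def pathCount (m k v : ℕ) : ℕ := ((heightSeqs m v).filter (upSteps m · = k)).card

lemma pathCount_zero_left (k v : ℕ) : pathCount 0 k v = if k = 0 then 1 else 0 := by
  simp [pathCount, heightSeqs, upSteps, apply_ite Finset.card, eq_comm]

lemma pathCount_succ_left (m k v : ℕ) : pathCount (m + 1) k v =
    ((heightSeqs m (v + 1)).filter (upSteps m · + 1 = k)).card +
      ∑ w ∈ Finset.Icc 1 v, pathCount m k w := by
  classical
  have hdisj : ∀ w ∈ Finset.Icc 1 (v + 1), ∀ w' ∈ Finset.Icc 1 (v + 1), w ≠ w' → Disjoint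
      (((heightSeqs m w).map ⟨prepend v, prepend_injective v⟩).filter (upSteps (m + 1) · = k))
      (((heightSeqs m w').map ⟨prepend v, prepend_injective v⟩).filter
        (upSteps (m + 1) · = k)) := by
    intro w _ w' _ hne
    refine Finset.disjoint_filter_filter ((Finset.disjoint_map _).2 ?_)
    refine Finset.disjoint_left.2 fun g hg hg' => hne ?_
    rw [← (mem_heightSeqs.1 hg).1, ← (mem_heightSeqs.1 hg').1]
  have hcard : ∀ w, (((heightSeqs m w).map ⟨prepend v, prepend_injective v⟩).filter
      (upSteps (m + 1) · = k)).card =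
        ((heightSeqs m w).filter (upSteps m · + (if w = v + 1 then 1 else 0) = k)).card := by
    intro w
    rw [Finset.filter_map, Finset.card_map]
    congr 1
    refine Finset.filter_congr fun g hg => ?_
    simp only [Function.comp_apply, Function.Embedding.coeFn_mk, upSteps_prepend,
      (mem_heightSeqs.1 hg).1]
  rw [pathCount, heightSeqs, Finset.filter_biUnion, Finset.card_biUnion hdisj,
    Finset.sum_Icc_succ_top (by omega), add_comm, hcard, if_pos rfl]
  congr 1
  refine Finset.sum_congr rfl fun w hw => ?_
  rw [hcard, if_neg (by grind), pathCount]
  rfl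

lemma pathCount_succ_zero (m v : ℕ) :
    pathCount (m + 1) 0 v = ∑ w ∈ Finset.Icc 1 v, pathCount m 0 w := by
  simp [pathCount_succ_left]

lemma pathCount_succ_succ (m k v : ℕ) : pathCount (m + 1) (k + 1) v =
    pathCount m k (v + 1) + ∑ w ∈ Finset.Icc 1 v, pathCount m (k + 1) w := by
  rw [pathCount_succ_left]
  simp only [add_left_inj, pathCount]

-- A two-by-two determinant, as in the enumeration of pairs of non-intersecting lattice paths.
lemma pathCount_succ_right (m k u : ℕ) : (pathCount m k (u + 1) : ℤ) =
    m.choose k * (m + u + 1).choose (u + k + 1) -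
      (m + 1).choose k * (m + u).choose (u + k + 1) := by
  induction m generalizing k u with
  | zero =>
    have hzero : u.choose (u + k + 1) = 0 := Nat.choose_eq_zero_of_lt (by omega)
    rcases k with _ | k <;> simp [pathCount_zero_left, hzero]
  | succ m ih =>
    have pascal (a b : ℕ) : ((a + 1).choose (b + 1) : ℤ) = a.choose b + a.choose (b + 1) :=
      mod_cast Nat.choose_succ_succ a b
    induction u with
    | zero =>
      cases k with
      | zero => simp [pathCount_succ_zero, ih]
      | succ k =>
        rw [pathCount_succ_succ, Finset.Icc_self, Finset.sum_singleton, Nat.cast_add, ih, ih]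
        simp only [add_zero, zero_add, add_comm 1 k, pascal]
        ring
    | succ u ihu =>
      rw [add_right_comm m 1 u] at ihu
      rw [show m + 1 + (u + 1) = m + u + 1 + 1 by ring]
      cases k with
      | zero =>
        rw [pathCount_succ_zero] at ihu ⊢
        rw [Finset.sum_Icc_succ_top (by omega), Nat.cast_add, ihu, ih, ← add_assoc m u 1]
        simp only [add_zero, Nat.choose_zero_right, Nat.cast_one, pascal]
        ring
      | succ k =>
        rw [pathCount_succ_succ, Nat.cast_add] at ihu ⊢
        rw [Finset.sum_Icc_succ_top (by omega), Nat.cast_add, eq_sub_of_add_eq' ihu, ih, ih, ih,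
          show m + (u + 1 + 1) = m + u + 1 + 1 by ring, ← add_assoc m u 1,
          show u + 1 + 1 + k = u + 1 + k + 1 by ring, show u + (k + 1) = u + 1 + k by ring,
          show u + 1 + (k + 1) = u + 1 + k + 1 by ring]
        simp only [pascal]
        ring

lemma choose_succ_mul_succ_add (n k : ℕ) :
    n.choose (k + 1) * (k + 1) + n.choose k * k = n * n.choose k := by
  rcases le_or_gt k n with h | h
  · rw [Nat.choose_succ_right_eq, ← mul_add, Nat.sub_add_cancel h, mul_comm]
  · simp [Nat.choose_eq_zero_of_lt h, Nat.choose_eq_zero_of_lt (h.trans k.lt_succ_self)]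

lemma mul_pathCount_zero_right (n k : ℕ) :
    n * pathCount n (k + 1) 0 = n.choose (k + 1) * n.choose k := by
  cases n with
  | zero => simp
  | succ m =>
    have hcount : (pathCount m k 1 : ℤ) =
        m.choose k * (m + 1).choose (k + 1) - (m + 1).choose k * m.choose (k + 1) := by
      simpa using pathCount_succ_right m k 0
    have habsorb := Nat.add_one_mul_choose_eq m k
    have hsucc := choose_succ_mul_succ_add (m + 1) k
    have hpascal := Nat.choose_succ_succ' m k
    rw [pathCount_succ_succ, Finset.Icc_eq_empty_of_lt one_pos, Finset.sum_empty, add_zero,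
      zero_add]
    zify at *
    rw [hcount]
    linear_combination ((m + 1).choose k + (m + 1).choose (k + 1) : ℤ) * habsorb +
      (m + 1).choose k * (m + 1) * hpascal + (m + 1).choose (k + 1) * hsucc

end Counting

section Encoding

variable {n : ℕ} {R : ℕ → ℕ → Prop} {h : ℕ → ℕ}

/-- A non-crossing equivalence relation on `{0, …, n - 1}`, encoded as a relation on `ℕ`. -/
structure IsNonCrossingRel (n : ℕ) (R : ℕ → ℕ → Prop) : Prop where
  lt : ∀ {i j}, R i j → i < n
  refl : ∀ {i}, i < n → R i i
  symm : ∀ {i j}, R i j → R j i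
  trans : ∀ {i j k}, R i j → R j k → R i k
  nonCrossing : ∀ {a b c d}, a < b → b < c → c < d → R a c → R b d → R a b

/-- `h` is the height sequence of `R`: point `i` has height `h (i + 1)`, which is one more than the
height of the preceding point if `i` is the minimum of its class, and the common height of the
smaller elements of its class otherwise. Unused entries of `h` are zero, as in `heightSeqs`. -/
structure IsHeight (n : ℕ) (R : ℕ → ℕ → Prop) (h : ℕ → ℕ) : Prop where
  zero : h 0 = 0
  eq_of_rel : ∀ {i j}, i < j → R i j → h (j + 1) = h (i + 1)
  eq_of_forall_not_rel : ∀ {i}, i < n → (∀ j < i, ¬R j i) → h (i + 1) = h i + 1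
  eq_zero : ∀ {i}, n < i → h i = 0

/-- The relation "equal height, and nothing lower in between" on `{0, …, n - 1}`, which recovers a
non-crossing relation from its height sequence. -/
def levelRel (n : ℕ) (h : ℕ → ℕ) (i j : ℕ) : Prop :=
  i < n ∧ j < n ∧ h (i + 1) = h (j + 1) ∧ ∀ l ∈ Set.uIcc i j, h (i + 1) ≤ h (l + 1)

lemma isNonCrossingRel_levelRel (n : ℕ) (h : ℕ → ℕ) : IsNonCrossingRel n (levelRel n h) where
  lt hij := hij.1
  refl hi := ⟨hi, hi, rfl, fun l hl => by rw [Set.uIcc_self] at hl; rw [hl]⟩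
  symm := fun ⟨hi, hj, heq, hle⟩ => ⟨hj, hi, heq.symm, by rwa [Set.uIcc_comm, ← heq]⟩
  trans := fun ⟨hi, _, hij, hle⟩ ⟨_, hk, hjk, hle'⟩ => ⟨hi, hk, hij.trans hjk, fun l hl =>
    (Set.uIcc_subset_uIcc_union_uIcc hl).elim (hle l) fun hl' => hij.trans_le (hle' l hl')⟩
  nonCrossing := by
    rintro a b c d hab hbc hcd ⟨ha, -, hac, hle⟩ ⟨hb, -, -, hle'⟩
    have hle_b := hle b (Set.mem_uIcc_of_le hab.le hbc.le)
    have hb_le := hle' c (Set.mem_uIcc_of_le hbc.le hcd.le)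
    refine ⟨ha, hb, by omega, fun l hl => hle l ?_⟩
    exact Set.uIcc_subset_uIcc_left (Set.mem_uIcc_of_le hab.le hbc.le) hl

lemma IsHeight.unique {h' : ℕ → ℕ} (hh : IsHeight n R h) (hh' : IsHeight n R h') : h = h' := by
  funext i
  induction i using Nat.strong_induction_on with
  | _ i ih =>
    rcases i with _ | i
    · rw [hh.zero, hh'.zero]
    · rcases le_or_gt n i with hi | hi
      · rw [hh.eq_zero (by omega), hh'.eq_zero (by omega)]
      · by_cases hmin : ∃ j < i, R j i
        · obtain ⟨j, hji, hj⟩ := hmin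
          rw [hh.eq_of_rel hji hj, hh'.eq_of_rel hji hj, ih (j + 1) (by omega)]
        · push Not at hmin
          rw [hh.eq_of_forall_not_rel hi hmin, hh'.eq_of_forall_not_rel hi hmin, ih i (by omega)]

/-- The smallest element of the class of `i` (zero if the class is empty). -/
noncomputable def classMin (R : ℕ → ℕ → Prop) (i : ℕ) : ℕ := sInf {j | R j i}

/-- The height sequence of a non-crossing relation, in the sense of `IsHeight`. -/
noncomputable def heightOf (n : ℕ) (R : ℕ → ℕ → Prop) : ℕ → ℕ
  | 0 => 0
  | i + 1 =>
    if n ≤ i then 0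
    else if classMin R i < i then heightOf n R (classMin R i + 1)
    else heightOf n R i + 1

lemma isHeight_heightOf (hR : IsNonCrossingRel n R) : IsHeight n R (heightOf n R) where
  zero := by rw [heightOf]
  eq_of_rel {i j} hij hRij := by
    have hmin : classMin R i = classMin R j := congrArg sInf (Set.ext fun l =>
      ⟨fun hl => hR.trans hl hRij, fun hl => hR.trans hl (hR.symm hRij)⟩)
    have hi : i < n := hR.lt hRij
    have hj : j < n := hR.lt (hR.symm hRij)
    have hle : classMin R i ≤ i := Nat.sInf_le (hR.refl hi)
    rw [heightOf, if_neg hj.not_ge, if_pos (hmin ▸ hle.trans_lt hij), ← hmin]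
    rcases hle.eq_or_lt with heq | hlt
    · rw [heq]
    · rw [heightOf.eq_2 n R i, if_neg hi.not_ge, if_pos hlt]
  eq_of_forall_not_rel {i} hi hmin := by
    have hmem : R (classMin R i) i :=
      Nat.sInf_mem (s := {j | R j i}) ⟨i, hR.refl hi⟩
    rw [heightOf, if_neg hi.not_ge, if_neg fun hlt => hmin _ hlt hmem]
  eq_zero {i} hi := by
    obtain ⟨i, rfl⟩ := Nat.exists_eq_add_one_of_ne_zero hi.ne_bot
    rw [heightOf, if_pos (by omega)]

lemma IsHeight.lt_or_rel (hR : IsNonCrossingRel n R) (hh : IsHeight n R h) {i l j : ℕ}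
    (hij : R i j) (hil : i ≤ l) (hlj : l ≤ j) : h (i + 1) < h (l + 1) ∨ R i l := by
  induction l using Nat.strong_induction_on with
  | _ l ih =>
    rcases hil.eq_or_lt with rfl | hil
    · exact .inr (hR.refl (hR.lt hij))
    rcases hlj.eq_or_lt with rfl | hlj
    · exact .inr hij
    by_cases hmin : ∃ p < l, R p l
    · obtain ⟨p, hpl, hp⟩ := hmin
      rcases lt_trichotomy p i with hpi | rfl | hip
      · have hRpi : R p i := hR.nonCrossing hpi hil hlj hp hij
        exact .inr (hR.trans (hR.symm hRpi) hp)
      · exact .inr hp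
      · rw [hh.eq_of_rel hpl hp]
        exact (ih p hpl hip.le (by omega)).imp_right fun hRip => hR.trans hRip hp
    · push Not at hmin
      have hl : l < n := hlj.trans (hR.lt (hR.symm hij))
      obtain ⟨q, rfl⟩ := Nat.exists_eq_add_one_of_ne_zero hil.ne_bot
      rw [hh.eq_of_forall_not_rel hl hmin]
      refine .inl (Nat.lt_succ_of_le ?_)
      rcases ih q (by omega) (by omega) (by omega) with hlt | hRiq
      · exact hlt.le
      · rcases (Nat.le_of_lt_succ hil).eq_or_lt with rfl | hiq
        · rfl
        · exact (hh.eq_of_rel hiq hRiq).ge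

lemma IsHeight.le_of_rel (hR : IsNonCrossingRel n R) (hh : IsHeight n R h) {i l j : ℕ}
    (hij : R i j) (hil : i ≤ l) (hlj : l ≤ j) : h (i + 1) ≤ h (l + 1) := by
  rcases hh.lt_or_rel hR hij hil hlj with hlt | hRil
  · exact hlt.le
  · rcases hil.eq_or_lt with rfl | hil
    · rfl
    · exact (hh.eq_of_rel hil hRil).ge

lemma IsHeight.succ_le_of_rel (hR : IsNonCrossingRel n R) (hh : IsHeight n R h) {i j : ℕ}
    (hij : i < j) (hRij : R i j) : h (j + 1) ≤ h j := by
  obtain ⟨q, rfl⟩ := Nat.exists_eq_add_one_of_ne_zero hij.ne_bot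
  exact (hh.eq_of_rel hij hRij).trans_le (hh.le_of_rel hR hRij (by omega) (by omega))

lemma IsHeight.rel_of_levelRel (hR : IsNonCrossingRel n R) (hh : IsHeight n R h) {i j : ℕ}
    (hij : i ≤ j) (hlevel : levelRel n h i j) : R i j := by
  obtain ⟨hi, hj, heq, hle⟩ := hlevel
  simp only [Set.uIcc_of_le hij, Set.mem_Icc, and_imp] at hle
  induction j using Nat.strong_induction_on with
  | _ j ih =>
    rcases hij.eq_or_lt with rfl | hij
    · exact hR.refl hi
    by_cases hmin : ∃ p < j, R p j
    · obtain ⟨p, hpj, hp⟩ := hmin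
      have hjp := hh.eq_of_rel hpj hp
      rcases le_or_gt i p with hip | hpi
      · exact hR.trans (ih p hpj hip (hpj.trans hj) (heq.trans hjp)
          fun l hil hlp => hle l hil (hlp.trans hpj.le)) hp
      · have hRpi : R p i := (hh.lt_or_rel hR hp hpi.le hij.le).resolve_left (by omega)
        exact hR.trans (hR.symm hRpi) hp
    · push Not at hmin
      obtain ⟨q, rfl⟩ := Nat.exists_eq_add_one_of_ne_zero hij.ne_bot
      have hq := hle q (by omega) (by omega)
      have := hh.eq_of_forall_not_rel hj hmin
      omega

lemma IsHeight.levelRel_of_rel (hR : IsNonCrossingRel n R) (hh : IsHeight n R h) {i j : ℕ}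
    (hij : i ≤ j) (hRij : R i j) : levelRel n h i j := by
  refine ⟨hR.lt hRij, hR.lt (hR.symm hRij), ?_, fun l hl => ?_⟩
  · rcases hij.eq_or_lt with rfl | hij
    · rfl
    · exact (hh.eq_of_rel hij hRij).symm
  · rw [Set.uIcc_of_le hij] at hl
    exact hh.le_of_rel hR hRij hl.1 hl.2

lemma IsHeight.levelRel_eq (hR : IsNonCrossingRel n R) (hh : IsHeight n R h) :
    levelRel n h = R := by
  have hlevel := isNonCrossingRel_levelRel n h
  funext i j
  rcases le_total i j with hij | hji
  · exact propext ⟨hh.rel_of_levelRel hR hij, hh.levelRel_of_rel hR hij⟩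
  · exact propext ⟨fun hl => hR.symm (hh.rel_of_levelRel hR hji (hlevel.symm hl)),
      fun hRij => hlevel.symm (hh.levelRel_of_rel hR hji (hR.symm hRij))⟩

protected lemma IsHeight.mem_heightSeqs (hR : IsNonCrossingRel n R) (hh : IsHeight n R h) :
    h ∈ heightSeqs n 0 := by
  refine mem_heightSeqs.2 ⟨hh.zero, fun i hi => ?_, fun i => hh.eq_zero⟩
  induction i using Nat.strong_induction_on with
  | _ i ih =>
    by_cases hmin : ∃ j < i, R j i
    · obtain ⟨j, hji, hj⟩ := hmin
      exact ⟨hh.eq_of_rel hji hj ▸ (ih j hji (hji.trans hi)).1,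
        (hh.succ_le_of_rel hR hji hj).trans (Nat.le_succ _)⟩
    · push Not at hmin
      rw [hh.eq_of_forall_not_rel hi hmin]
      omega

lemma isHeight_levelRel (hh : h ∈ heightSeqs n 0) : IsHeight n (levelRel n h) h := by
  obtain ⟨hzero, hstep, hpad⟩ := mem_heightSeqs.1 hh
  refine ⟨hzero, fun _ hij => hij.2.2.1.symm, fun {i} hi hmin => ?_, fun {i} => hpad i⟩
  obtain ⟨hpos, hle⟩ := hstep i hi
  by_contra hne
  -- The predecessor of `i` in its class is the last time before `i` at which the path is lower.
  set p := Nat.findGreatest (fun p => h p < h (i + 1)) i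
  have hp : h p < h (i + 1) := Nat.findGreatest_spec (P := fun p => h p < h (i + 1)) i.zero_le
    (by omega)
  have hpi : p < i := lt_of_le_of_ne (Nat.findGreatest_le i) fun hpi => by rw [hpi] at hp; omega
  have hlast : ∀ l, p ≤ l → l ≤ i → h (i + 1) ≤ h (l + 1) := fun l hpl hli => by
    rcases hli.eq_or_lt with rfl | hli
    · rfl
    · exact not_lt.1 (Nat.findGreatest_is_greatest (P := fun p => h p < h (i + 1))
        (Nat.lt_succ_of_le hpl) hli)
  have heq : h (p + 1) = h (i + 1) :=
    le_antisymm ((hstep p (hpi.trans hi)).2.trans hp) (hlast p le_rfl hpi.le)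
  refine hmin p hpi ⟨hpi.trans hi, hi, heq, fun l hl => ?_⟩
  rw [Set.uIcc_of_le hpi.le] at hl
  exact heq.trans_le (hlast l hl.1 hl.2)

open Classical in
lemma IsHeight.upSteps_eq (hR : IsNonCrossingRel n R) (hh : IsHeight n R h) :
    upSteps n h = ((Finset.range n).filter fun i => ∀ j < i, ¬R j i).card := by
  rw [upSteps]
  congr 1
  refine Finset.filter_congr fun i hi => ⟨fun hup j hji hj => ?_, fun hmin => ?_⟩
  · have := hh.succ_le_of_rel hR hji hj
    omega
  · exact hh.eq_of_forall_not_rel (Finset.mem_range.1 hi) hmin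

/-- The relation "in the same block of `P`", on `ℕ`. -/
def blockRel (P : NCPart n) (i j : ℕ) : Prop :=
  ∃ (hi : i < n) (hj : j < n), P.1.part ⟨i, hi⟩ = P.1.part ⟨j, hj⟩

lemma isNonCrossingRel_blockRel (P : NCPart n) : IsNonCrossingRel n (blockRel P) where
  lt hij := hij.1
  refl hi := ⟨hi, hi, rfl⟩
  symm := fun ⟨hi, hj, hij⟩ => ⟨hj, hi, hij.symm⟩
  trans := fun ⟨hi, _, hij⟩ ⟨_, hk, hjk⟩ => ⟨hi, hk, hij.trans hjk⟩
  nonCrossing := by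
    rintro a b c d hab hbc hcd ⟨ha, hc, hac⟩ ⟨hb, hd, hbd⟩
    have hmem (i : Fin n) : i ∈ P.1.part i := P.1.mem_part (Finset.mem_univ i)
    have hpart (i : Fin n) : P.1.part i ∈ P.1.parts := P.1.part_mem.2 (Finset.mem_univ i)
    exact ⟨ha, hb, P.2 ⟨a, ha⟩ ⟨b, hb⟩ ⟨c, hc⟩ ⟨d, hd⟩ hab hbc hcd _ (hpart _) _ (hpart _)
      (hmem _) (hac ▸ hmem _) (hmem _) (hbd ▸ hmem _)⟩

lemma blockRel_val (P : NCPart n) (i j : Fin n) : blockRel P i j ↔ j ∈ P.1.part i := by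
  rw [P.1.mem_part_iff_part_eq_part (Finset.mem_univ j) (Finset.mem_univ i)]
  exact ⟨fun ⟨_, _, hij⟩ => hij.symm, fun hij => ⟨i.2, j.2, hij.symm⟩⟩

lemma blockRel_injective : Function.Injective (blockRel : NCPart n → ℕ → ℕ → Prop) := by
  intro P Q hPQ
  have hpart : P.1.part = Q.1.part := by
    ext i j
    rw [← blockRel_val, ← blockRel_val, hPQ]
  have hparts (P : NCPart n) (B : Finset (Fin n)) : B ∈ P.1.parts ↔ ∃ i, P.1.part i = B := by
    refine ⟨fun hB => ?_, fun ⟨i, hi⟩ => hi ▸ P.1.part_mem.2 (Finset.mem_univ i)⟩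
    obtain ⟨i, hi⟩ := P.1.nonempty_of_mem_parts hB
    exact ⟨i, P.1.part_eq_of_mem hB hi⟩
  exact Subtype.ext (Finpartition.ext (by ext B; rw [hparts, hparts, hpart]))

lemma exists_blockRel_eq (hR : IsNonCrossingRel n R) : ∃ P : NCPart n, blockRel P = R := by
  classical
  obtain ⟨Q, hQ⟩ : ∃ Q : Finpartition (Finset.univ : Finset (Fin n)),
      ∀ i j : Fin n, j ∈ Q.part i ↔ R i j :=
    ⟨Finpartition.ofSetoid ⟨fun i j => R i j, fun i => hR.refl i.2, hR.symm, hR.trans⟩,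
      fun _ _ => Finpartition.mem_part_ofSetoid_iff_rel⟩
  have hnc : IsNonCrossing Q := by
    intro a b c d hab hbc hcd B hB B' hB' ha hc hb hd
    rw [← Q.part_eq_of_mem hB ha, hQ] at hc
    rw [← Q.part_eq_of_mem hB' hb, hQ] at hd
    have hb' := (hQ a b).2 (hR.nonCrossing hab hbc hcd hc hd)
    rw [Q.part_eq_of_mem hB ha] at hb'
    exact Q.eq_of_mem_parts hB hB' hb' hb
  refine ⟨⟨Q, hnc⟩, ?_⟩
  funext i j
  refine propext ⟨fun hij => ?_, fun hij => ?_⟩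
  · obtain ⟨hi, hj, -⟩ := id hij
    exact (hQ ⟨i, hi⟩ ⟨j, hj⟩).1 ((blockRel_val _ ⟨i, hi⟩ ⟨j, hj⟩).1 hij)
  · exact (blockRel_val _ ⟨i, hR.lt hij⟩ ⟨j, hR.lt (hR.symm hij)⟩).2 ((hQ _ _).2 hij)

open Classical in
lemma numBlocks_eq (P : NCPart n) :
    numBlocks P = ((Finset.range n).filter fun i => ∀ j < i, ¬blockRel P j i).card := by
  have hlt {i : ℕ} (hi : i ∈ (Finset.range n).filter fun i => ∀ j < i, ¬blockRel P j i) : i < n :=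
    Finset.mem_range.1 (Finset.mem_filter.1 hi).1
  symm
  refine Finset.card_bij (fun i hi => P.1.part ⟨i, hlt hi⟩)
    (fun i hi => P.1.part_mem.2 (Finset.mem_univ _)) (fun i hi j hj hij => ?_) fun B hB => ?_
  · have hrel : blockRel P i j := ⟨hlt hi, hlt hj, hij⟩
    exact le_antisymm
      (not_lt.1 fun hji => (Finset.mem_filter.1 hi).2 j hji
        ((isNonCrossingRel_blockRel P).symm hrel))
      (not_lt.1 fun hij => (Finset.mem_filter.1 hj).2 i hij hrel)
  · have hne := P.1.nonempty_of_mem_parts hB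
    have hpart := P.1.part_eq_of_mem hB (B.min'_mem hne)
    refine ⟨B.min' hne, Finset.mem_filter.2 ⟨Finset.mem_range.2 (B.min' hne).2, ?_⟩, hpart⟩
    rintro j hj ⟨hjn, _, hjB⟩
    have hjB : (⟨j, hjn⟩ : Fin n) ∈ B := by
      rw [← hpart, ← hjB]
      exact P.1.mem_part (Finset.mem_univ _)
    exact absurd (B.min'_le _ hjB) (not_le.2 hj)

theorem card_numBlocks_eq (n k : ℕ) :
    ((Finset.univ : Finset (NCPart n)).filter (numBlocks · = k)).card = pathCount n k 0 := by
  have hheight (P : NCPart n) := isHeight_heightOf (isNonCrossingRel_blockRel P)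
  have hup (P : NCPart n) : upSteps n (heightOf n (blockRel P)) = numBlocks P := by
    rw [numBlocks_eq, (hheight P).upSteps_eq (isNonCrossingRel_blockRel P)]
  refine Finset.card_bij (fun P _ => heightOf n (blockRel P)) (fun P hP => ?_)
    (fun P _ Q _ hPQ => blockRel_injective ?_) fun h hh => ?_
  · rw [Finset.mem_filter, hup]
    exact ⟨(hheight P).mem_heightSeqs (isNonCrossingRel_blockRel P), (Finset.mem_filter.1 hP).2⟩
  · rw [← (hheight P).levelRel_eq (isNonCrossingRel_blockRel P), hPQ,
      (hheight Q).levelRel_eq (isNonCrossingRel_blockRel Q)]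
  · obtain ⟨hmem, hk⟩ := Finset.mem_filter.1 hh
    obtain ⟨P, hP⟩ := exists_blockRel_eq (isNonCrossingRel_levelRel n h)
    have heq : heightOf n (blockRel P) = h := (hheight P).unique (hP ▸ isHeight_levelRel hmem)
    exact ⟨P, Finset.mem_filter.2 ⟨Finset.mem_univ P, by rw [← hup, heq, hk]⟩, heq⟩

theorem mul_card_numBlocks_eq_succ (n k : ℕ) :
    n * ((Finset.univ : Finset (NCPart n)).filter (numBlocks · = k + 1)).card =
      n.choose (k + 1) * n.choose k := by
  rw [card_numBlocks_eq, mul_pathCount_zero_right]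

lemma numBlocks_pos (hn : 0 < n) (P : NCPart n) : 0 < numBlocks P :=
  Finset.card_pos.2 ⟨_, P.1.part_mem.2 (Finset.mem_univ (⟨0, hn⟩ : Fin n))⟩

end Encoding

section LocalLimit

open Real

/-- The logarithm of the quotient of `n.choose k` by the Gaussian profile
`exp (-2 * (k - n / 2) ^ 2 / (n + 1))`; the local limit theorem says that it varies little around
`k = n / 2`. The variance `(n + 1) / 4` in place of `n / 4` makes the odd function `2 * v` the
linearisation of the increment, see `logChooseDefect_succ_sub`. -/
noncomputable def logChooseDefect (n k : ℕ) : ℝ :=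
  log (n.choose k) + 2 * ((k : ℝ) - n / 2) ^ 2 / (n + 1)

lemma logChooseDefect_sub_right {n k : ℕ} (hk : k ≤ n) :
    logChooseDefect n (n - k) = logChooseDefect n k := by
  rw [logChooseDefect, logChooseDefect, Nat.choose_symm hk, Nat.cast_sub hk]
  ring

lemma logChooseDefect_succ_sub {n k : ℕ} (hk : k < n) {v : ℝ} (hv : v = (2 * k + 1 - n) / (n + 1)) :
    logChooseDefect n (k + 1) - logChooseDefect n k = 2 * v - log ((1 + v) / (1 - v)) := by
  have hkn : (0 : ℝ) < n - k := sub_pos.2 (mod_cast hk)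
  have hchoose : (n.choose k : ℝ) ≠ 0 := mod_cast (Nat.choose_pos hk.le).ne'
  have habsorb : (n.choose (k + 1) : ℝ) * (k + 1) = n.choose k * (n - k) := by
    rw [← Nat.cast_sub hk.le]
    exact_mod_cast Nat.choose_succ_right_eq n k
  have hadd : 1 + v = 2 * (k + 1) / (n + 1) := by rw [hv]; field_simp; ring
  have hsub : 1 - v = 2 * (n - k) / (n + 1) := by rw [hv]; field_simp; ring
  have hlog : log (n.choose (k + 1)) = log (n.choose k) - log ((1 + v) / (1 - v)) := by
    rw [hadd, hsub, div_div_div_cancel_right₀ (by positivity), mul_div_mul_left _ _ two_ne_zero,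
      ← log_div hchoose (by positivity), div_div_eq_mul_div, ← habsorb,
      mul_div_cancel_right₀ _ (by positivity)]
  rw [logChooseDefect, logChooseDefect, hlog, hv]
  push_cast
  field_simp
  ring

lemma two_mul_le_log_div {v : ℝ} (hv : 0 ≤ v) (hv' : v < 1) : 2 * v ≤ log ((1 + v) / (1 - v)) := by
  have hlog := sum_range_le_log_div hv hv' 1
  simp only [Finset.sum_range_one, mul_zero, zero_add, pow_one, Nat.cast_zero, div_one] at hlog
  linarith

lemma log_div_le_two_mul_add {v : ℝ} (hv : 0 ≤ v) (hv' : v ≤ 1 / 2) :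
    log ((1 + v) / (1 - v)) ≤ 2 * v + 3 * v ^ 3 := by
  have hlog := log_div_le_sum_range_add hv (by linarith) 1
  simp only [Finset.sum_range_one, mul_zero, zero_add, pow_one, Nat.cast_zero, div_one,
    mul_one] at hlog
  have hcube : v ^ 3 / (1 - v ^ 2) ≤ 4 / 3 * v ^ 3 := by
    rw [div_le_iff₀ (by nlinarith)]
    nlinarith [mul_nonneg (pow_nonneg hv 3) (show 0 ≤ 1 / 4 - v ^ 2 by nlinarith)]
  nlinarith [pow_nonneg hv 3]

lemma logChooseDefect_succ_le {n k : ℕ} (hk : k < n) (hmid : n ≤ 2 * k + 1) :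
    logChooseDefect n (k + 1) ≤ logChooseDefect n k := by
  have hmid : (n : ℝ) ≤ 2 * k + 1 := mod_cast hmid
  have hkn : (k : ℝ) < n := mod_cast hk
  have hv : 0 ≤ (2 * k + 1 - n : ℝ) / (n + 1) := div_nonneg (by linarith) (by positivity)
  have hv' : (2 * k + 1 - n : ℝ) / (n + 1) < 1 := (div_lt_one (by positivity)).2 (by linarith)
  linarith [logChooseDefect_succ_sub hk rfl, two_mul_le_log_div hv hv']

lemma logChooseDefect_le_succ_add {n k : ℕ} (hk : k < n) (hmid : n ≤ 2 * k + 1) {w : ℝ}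
    (hw : (2 * k + 1 - n : ℝ) / (n + 1) ≤ w) (hw' : w ≤ 1 / 2) :
    logChooseDefect n k ≤ logChooseDefect n (k + 1) + 3 * w ^ 3 := by
  have hmid : (n : ℝ) ≤ 2 * k + 1 := mod_cast hmid
  have hv : 0 ≤ (2 * k + 1 - n : ℝ) / (n + 1) := div_nonneg (by linarith) (by positivity)
  linarith [logChooseDefect_succ_sub hk rfl, log_div_le_two_mul_add hv (hw.trans hw'),
    pow_le_pow_left₀ hv hw 3]

lemma logChooseDefect_le_middle {n k : ℕ} (hk : k ≤ n) :
    logChooseDefect n k ≤ logChooseDefect n (n / 2) := by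
  wlog hmid : n / 2 ≤ k generalizing k
  · rw [← logChooseDefect_sub_right hk]
    exact this (Nat.sub_le _ _) (by omega)
  induction k, hmid using Nat.le_induction with
  | base => rfl
  | succ k hmid ih =>
    exact (logChooseDefect_succ_le (by omega) (by omega)).trans (ih (by omega))

lemma logChooseDefect_middle_le_add {n k : ℕ} (hk : k ≤ n)
    (hclose : 4 * (|(k : ℝ) - n / 2| + 1) ≤ n + 1) :
    logChooseDefect n (n / 2) ≤
      logChooseDefect n k + 24 * (|(k : ℝ) - n / 2| + 1) ^ 4 / (n + 1) ^ 3 := by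
  wlog hmid : n / 2 ≤ k generalizing k
  · have habs : |((n - k : ℕ) : ℝ) - n / 2| = |(k : ℝ) - n / 2| := by
      rw [Nat.cast_sub hk, ← abs_neg]
      ring_nf
    rw [← logChooseDefect_sub_right hk, ← habs]
    exact this (Nat.sub_le _ _) (habs ▸ hclose) (by omega)
  set t : ℝ := |(k : ℝ) - n / 2| + 1
  set w : ℝ := 2 * t / (n + 1) with hw
  have htk : (k : ℝ) - n / 2 + 1 ≤ t := by linarith [le_abs_self ((k : ℝ) - n / 2)]
  have hw' : w ≤ 1 / 2 := (div_le_iff₀ (by positivity)).2 (by linarith)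
  have hsum : ∀ j, n / 2 ≤ j → j ≤ k → logChooseDefect n (n / 2) ≤
      logChooseDefect n j + ((j : ℝ) - (n / 2 : ℕ)) * (3 * w ^ 3) := by
    intro j hj
    induction j, hj using Nat.le_induction with
    | base => simp
    | succ j hj ih =>
      intro hjk
      have hjk' : (j : ℝ) + 1 ≤ k := mod_cast hjk
      have hstep := logChooseDefect_le_succ_add (n := n) (k := j) (w := w) (by omega) (by omega)
        (by rw [hw]; gcongr; linarith) hw'
      push_cast
      linarith [ih (by omega)]
  have hmiddle : ((n : ℝ) - 1) / 2 ≤ (n / 2 : ℕ) := by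
    have : (n : ℝ) ≤ 2 * (n / 2 : ℕ) + 1 := by exact_mod_cast (by omega : n ≤ 2 * (n / 2) + 1)
    linarith
  have : 0 ≤ w := by positivity
  calc logChooseDefect n (n / 2)
      ≤ logChooseDefect n k + ((k : ℝ) - (n / 2 : ℕ)) * (3 * w ^ 3) := hsum k hmid le_rfl
    _ ≤ logChooseDefect n k + t * (3 * w ^ 3) := by gcongr; linarith
    _ = logChooseDefect n k + 24 * t ^ 4 / (n + 1) ^ 3 := by rw [hw]; field_simp; ring

lemma sq_middle_sub_le (n : ℕ) : (((n / 2 : ℕ) : ℝ) - n / 2) ^ 2 ≤ 1 / 4 := by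
  have hle : (2 * (n / 2 : ℕ) : ℝ) ≤ n := by exact_mod_cast Nat.mul_div_le n 2
  have hge : (n : ℝ) ≤ 2 * (n / 2 : ℕ) + 1 := by exact_mod_cast (by omega : n ≤ 2 * (n / 2) + 1)
  nlinarith

lemma choose_div_choose_middle_eq {n k : ℕ} (hk : k ≤ n) :
    (n.choose k / n.choose (n / 2) : ℝ) = exp (logChooseDefect n k - logChooseDefect n (n / 2) +
      2 * (((n / 2 : ℕ) : ℝ) - n / 2) ^ 2 / (n + 1) - 2 * ((k : ℝ) - n / 2) ^ 2 / (n + 1)) := by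
  have hpos : (0 : ℝ) < n.choose k := mod_cast Nat.choose_pos hk
  have hpos' : (0 : ℝ) < n.choose (n / 2) := mod_cast Nat.choose_pos (Nat.div_le_self n 2)
  rw [← exp_log (div_pos hpos hpos'), log_div hpos.ne' hpos'.ne', logChooseDefect, logChooseDefect]
  ring_nf

lemma choose_div_choose_middle_le_one (n k : ℕ) : (n.choose k / n.choose (n / 2) : ℝ) ≤ 1 :=
  div_le_one_of_le₀ (mod_cast Nat.choose_le_middle k n) (Nat.cast_nonneg _)

lemma choose_div_choose_middle_le (n k : ℕ) : (n.choose k / n.choose (n / 2) : ℝ) ≤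
    exp (1 / (2 * (n + 1)) - 2 * ((k : ℝ) - n / 2) ^ 2 / (n + 1)) := by
  rcases le_or_gt k n with hk | hk
  · have hmiddle : 2 * (((n / 2 : ℕ) : ℝ) - n / 2) ^ 2 / (n + 1) ≤ 1 / (2 * (n + 1)) := by
      rw [div_le_div_iff₀ (by positivity) (by positivity)]
      nlinarith [sq_middle_sub_le n, (Nat.cast_nonneg n : (0 : ℝ) ≤ n)]
    rw [choose_div_choose_middle_eq hk, exp_le_exp]
    linarith [logChooseDefect_le_middle hk]
  · rw [Nat.choose_eq_zero_of_lt hk, Nat.cast_zero, zero_div]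
    positivity

lemma tendsto_sqrt_natCast_atTop : Tendsto (fun n : ℕ => √(n : ℝ)) atTop atTop :=
  tendsto_sqrt_atTop.comp tendsto_natCast_atTop_atTop

section

variable {k : ℕ → ℕ} {u : ℝ}

lemma tendsto_abs_sub_add_one_div_sqrt
    (hk : Tendsto (fun n : ℕ => ((k n : ℝ) - n / 2) / √n) atTop (nhds u)) :
    Tendsto (fun n : ℕ => (|(k n : ℝ) - n / 2| + 1) / √n) atTop (nhds |u|) := by
  have hone : Tendsto (fun n : ℕ => 1 / √n) atTop (nhds 0) :=
    tendsto_const_nhds.div_atTop tendsto_sqrt_natCast_atTop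
  simpa only [add_div, abs_div, abs_of_nonneg (sqrt_nonneg _), add_zero] using hk.abs.add hone

lemma eventually_abs_sub_le
    (hk : Tendsto (fun n : ℕ => ((k n : ℝ) - n / 2) / √n) atTop (nhds u)) :
    ∀ᶠ n : ℕ in atTop, 4 * (|(k n : ℝ) - n / 2| + 1) ≤ n + 1 := by
  have hlt := ((tendsto_abs_sub_add_one_div_sqrt hk).div_atTop
    tendsto_sqrt_natCast_atTop).eventually_lt_const
    (show (0 : ℝ) < 1 / 4 by norm_num)
  filter_upwards [hlt, eventually_gt_atTop 0] with n hn hpos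
  have hpos : (0 : ℝ) < n := mod_cast hpos
  rw [div_div, mul_self_sqrt hpos.le, div_lt_iff₀ hpos] at hn
  linarith

lemma eventually_le_of_tendsto
    (hk : Tendsto (fun n : ℕ => ((k n : ℝ) - n / 2) / √n) atTop (nhds u)) :
    ∀ᶠ n in atTop, k n ≤ n := by
  filter_upwards [eventually_abs_sub_le hk] with n hn
  have : (k n : ℝ) ≤ n := by
    linarith [le_abs_self ((k n : ℝ) - n / 2), abs_nonneg ((k n : ℝ) - n / 2)]
  exact_mod_cast this

lemma tendsto_logChooseDefect_sub_middle
    (hk : Tendsto (fun n : ℕ => ((k n : ℝ) - n / 2) / √n) atTop (nhds u)) :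
    Tendsto (fun n => logChooseDefect n (k n) - logChooseDefect n (n / 2)) atTop (nhds 0) := by
  have herror : Tendsto (fun n : ℕ => -(24 * (|(k n : ℝ) - n / 2| + 1) ^ 4 / (n + 1) ^ 3)) atTop
      (nhds 0) := by
    have hlim := (((tendsto_abs_sub_add_one_div_sqrt hk).pow 4).mul
      ((tendsto_natCast_div_add_atTop (1 : ℝ)).pow 2)).mul
      ((tendsto_one_div_add_atTop_nhds_zero_nat (𝕜 := ℝ)).const_mul (-24))
    rw [mul_zero, mul_zero] at hlim
    refine hlim.congr' ?_
    filter_upwards [eventually_gt_atTop 0] with n hn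
    have hn : (0 : ℝ) < n := mod_cast hn
    rw [div_pow _ (√n), show √(n : ℝ) ^ 4 = (√n ^ 2) ^ 2 by ring, sq_sqrt hn.le]
    field_simp
  refine tendsto_of_tendsto_of_tendsto_of_le_of_le' herror tendsto_const_nhds ?_ ?_
  · filter_upwards [eventually_abs_sub_le hk, eventually_le_of_tendsto hk] with n hclose hkn
    linarith [logChooseDefect_middle_le_add hkn hclose]
  · filter_upwards [eventually_le_of_tendsto hk] with n hkn
    linarith [logChooseDefect_le_middle hkn]

/-- The de Moivre–Laplace local limit theorem for the symmetric binomial law. -/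
theorem tendsto_choose_div_choose_middle
    (hk : Tendsto (fun n : ℕ => ((k n : ℝ) - n / 2) / √n) atTop (nhds u)) :
    Tendsto (fun n : ℕ => (n.choose (k n) / n.choose (n / 2) : ℝ)) atTop
      (nhds (exp (-2 * u ^ 2))) := by
  have hmiddle : Tendsto (fun n : ℕ => 2 * (((n / 2 : ℕ) : ℝ) - n / 2) ^ 2 / (n + 1)) atTop
      (nhds 0) := by
    refine squeeze_zero (fun n => by positivity) (fun n => ?_)
      (tendsto_one_div_add_atTop_nhds_zero_nat (𝕜 := ℝ))
    gcongr
    linarith [sq_middle_sub_le n]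
  have hgauss : Tendsto (fun n : ℕ => 2 * ((k n : ℝ) - n / 2) ^ 2 / (n + 1)) atTop
      (nhds (2 * u ^ 2)) := by
    have hlim := ((hk.pow 2).const_mul 2).mul (tendsto_natCast_div_add_atTop (1 : ℝ))
    rw [mul_one] at hlim
    refine hlim.congr' ?_
    filter_upwards [eventually_gt_atTop 0] with n hn
    have hn : (0 : ℝ) < n := mod_cast hn
    rw [div_pow, sq_sqrt hn.le]
    field_simp
  have hexp := (continuous_exp.tendsto _).comp
    (((tendsto_logChooseDefect_sub_middle hk).add hmiddle).sub hgauss)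
  rw [add_zero, zero_sub, ← neg_mul] at hexp
  refine hexp.congr' ?_
  filter_upwards [eventually_le_of_tendsto hk] with n hkn
  exact (choose_div_choose_middle_eq hkn).symm

end

end LocalLimit

section Integration

open MeasureTheory

lemma integral_card_filter_eq_ceil {ι : Type*} (s : Finset ι) (X : ι → ℤ) :
    ∫ y : ℝ, ((s.filter (X · = ⌈y⌉)).card : ℝ) = s.card := by
  have hpre (i : ι) : {y : ℝ | X i = ⌈y⌉} = Set.Ioc (X i - 1 : ℝ) (X i) := by
    rw [← Int.preimage_ceil_singleton]
    exact Set.ext fun y => eq_comm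
  have hind (y : ℝ) : ((s.filter (X · = ⌈y⌉)).card : ℝ) =
      ∑ i ∈ s, (Set.Ioc (X i - 1 : ℝ) (X i)).indicator 1 y := by
    simp only [← hpre, Set.indicator_apply, Set.mem_ofPred_eq, Pi.one_apply, Finset.sum_boole]
  have hint (i : ι) : Integrable ((Set.Ioc (X i - 1 : ℝ) (X i)).indicator (1 : ℝ → ℝ)) :=
    (integrable_indicator_iff measurableSet_Ioc).2 (integrableOn_const (by simp))
  simp only [hind, integral_finsetSum s fun i _ => hint i,
    integral_indicator_one measurableSet_Ioc, Real.volume_real_Ioc, sub_sub_cancel,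
    max_eq_left zero_le_one, Finset.sum_const, nsmul_eq_mul, mul_one]

lemma integral_card_filter_eq_ceil_add_mul {ι : Type*} (s : Finset ι) (X : ι → ℤ) (μ : ℝ) {σ : ℝ}
    (hσ : 0 < σ) :
    ∫ y : ℝ, ((s.filter (X · = ⌈μ + y * σ⌉)).card : ℝ) = σ⁻¹ * s.card := by
  rw [Measure.integral_comp_mul_right (fun y => ((s.filter (X · = ⌈μ + y⌉)).card : ℝ)),
    integral_add_left_eq_self (fun y => ((s.filter (X · = ⌈y⌉)).card : ℝ)),
    integral_card_filter_eq_ceil, abs_of_pos (inv_pos.2 hσ), smul_eq_mul]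

lemma measurable_card_filter_eq_ceil {ι : Type*} (s : Finset ι) (X : ι → ℤ) (μ σ : ℝ) :
    Measurable fun y : ℝ => ((s.filter (X · = ⌈μ + y * σ⌉)).card : ℝ) :=
  (Measurable.of_discrete (f := fun z : ℤ => ((s.filter (X · = z)).card : ℝ))).comp
    (Int.measurable_ceil.comp (by fun_prop))

section

variable {ι : Type*} {l : Filter ι} {Ω : ι → Type*} [∀ i, Fintype (Ω i)] {X : ∀ i, Ω i → ℤ}
  {μ σ a : ι → ℝ} {f g : ℝ → ℝ}

lemma tendsto_card_filter_le_filter_eq_ceil (hσ : Tendsto σ l atTop) {x y : ℝ} (hxy : y ≠ x)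
    (hlim : Tendsto (fun i => a i * ((Finset.univ.filter (X i · = ⌈μ i + y * σ i⌉)).card : ℝ)) l
      (nhds (f y))) :
    Tendsto (fun i => a i * (((Finset.univ.filter fun ω => (X i ω : ℝ) ≤ μ i + x * σ i).filter
      (X i · = ⌈μ i + y * σ i⌉)).card : ℝ)) l (nhds ((Set.Iic x).indicator f y)) := by
  rcases hxy.lt_or_gt with hyx | hxy
  · rw [Set.indicator_of_mem (Set.mem_Iic.2 hyx.le)]
    refine hlim.congr' ?_
    filter_upwards [hσ.eventually_ge_atTop (x - y)⁻¹] with i hi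
    have hgap : 1 ≤ (x - y) * σ i := (inv_le_iff_one_le_mul₀' (sub_pos.2 hyx)).1 hi
    rw [Finset.filter_filter]
    congr 3
    refine Finset.filter_congr fun ω _ => ⟨fun h => ⟨?_, h⟩, And.right⟩
    rw [h]
    linarith [Int.ceil_lt_add_one (μ i + y * σ i)]
  · rw [Set.indicator_of_notMem (by simpa using hxy)]
    refine tendsto_const_nhds.congr' ?_
    filter_upwards [hσ.eventually_gt_atTop 0] with i hi
    rw [Finset.filter_filter, Finset.filter_false_of_mem, Finset.card_empty, Nat.cast_zero,
      mul_zero]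
    rintro ω - ⟨hle, heq⟩
    have := mul_lt_mul_of_pos_right hxy hi
    rw [heq] at hle
    linarith [Int.le_ceil (μ i + y * σ i)]

/-- The local limit `f` need not be normalised: both the number of `ω` with `X ω ≤ μ + x * σ` and
the number of all `ω` are integrals of counts of level sets, so the scaling factors cancel. -/
theorem tendsto_card_le_div_card [l.IsCountablyGenerated] (hσ : Tendsto σ l atTop)
    (hlim : ∀ y, Tendsto
      (fun i => a i * ((Finset.univ.filter (X i · = ⌈μ i + y * σ i⌉)).card : ℝ)) l (nhds (f y)))
    (hbound : ∀ᶠ i in l, ∀ y,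
      |a i * ((Finset.univ.filter (X i · = ⌈μ i + y * σ i⌉)).card : ℝ)| ≤ g y)
    (hg : Integrable g) (hf : ∫ y, f y ≠ 0) (x : ℝ) :
    Tendsto (fun i => ((Finset.univ.filter fun ω => (X i ω : ℝ) ≤ μ i + x * σ i).card : ℝ) /
      Fintype.card (Ω i)) l (nhds ((∫ y in Set.Iic x, f y) / ∫ y, f y)) := by
  have hintegral (s : ∀ i, Finset (Ω i)) :
      (fun i => ∫ y, a i * (((s i).filter (X i · = ⌈μ i + y * σ i⌉)).card : ℝ)) =ᶠ[l]
        fun i => a i * (σ i)⁻¹ * (s i).card := by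
    filter_upwards [hσ.eventually_gt_atTop 0] with i hi
    rw [integral_const_mul, integral_card_filter_eq_ceil_add_mul _ _ _ hi, mul_assoc]
  have hmeas (s : ∀ i, Finset (Ω i)) (i : ι) : AEStronglyMeasurable
      (fun y => a i * (((s i).filter (X i · = ⌈μ i + y * σ i⌉)).card : ℝ)) :=
    ((measurable_card_filter_eq_ceil _ _ _ _).const_mul _).aestronglyMeasurable
  have htotal : Tendsto (fun i => a i * (σ i)⁻¹ * (Fintype.card (Ω i) : ℝ)) l
      (nhds (∫ y, f y)) :=
    (tendsto_integral_filter_of_dominated_convergence g (.of_forall (hmeas fun _ => Finset.univ))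
      (hbound.mono fun _ hi => .of_forall hi) hg (.of_forall hlim)).congr'
        (hintegral fun _ => Finset.univ)
  have htail : Tendsto (fun i => a i * (σ i)⁻¹ *
      ((Finset.univ.filter fun ω => (X i ω : ℝ) ≤ μ i + x * σ i).card : ℝ)) l
      (nhds (∫ y in Set.Iic x, f y)) := by
    rw [← integral_indicator measurableSet_Iic]
    refine (tendsto_integral_filter_of_dominated_convergence g (.of_forall (hmeas _))
      (hbound.mono fun i hi => .of_forall fun y => (le_trans ?_ (hi y))) hg ?_).congr'
        (hintegral fun i => Finset.univ.filter fun ω => (X i ω : ℝ) ≤ μ i + x * σ i)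
    · rw [Real.norm_eq_abs, abs_mul, abs_mul, Nat.abs_cast, Nat.abs_cast]
      gcongr
      exact Finset.filter_subset _ _
    · filter_upwards [Measure.ae_ne volume x] with y hy
      exact tendsto_card_filter_le_filter_eq_ceil hσ hy (hlim y)
  refine (htail.div htotal hf).congr' ?_
  filter_upwards [htotal.eventually_ne hf] with i hi
  exact mul_div_mul_left _ _ (left_ne_zero_of_mul hi)

end

lemma toReal_gaussianReal_zero_one (s : Set ℝ) : (gaussianReal 0 1 s).toReal =
    (∫ y in s, Real.exp (-(1 / 2) * y ^ 2)) / ∫ y, Real.exp (-(1 / 2) * y ^ 2) := by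
  have hpdf : gaussianPDFReal 0 1 =
      fun y => (√(2 * Real.pi))⁻¹ * Real.exp (-(1 / 2) * y ^ 2) := by
    funext y
    rw [gaussianPDFReal, NNReal.coe_one, mul_one, mul_one, sub_zero, neg_div, neg_mul,
      one_div_mul_eq_div]
  have htotal := integral_gaussianPDFReal_eq_one 0 one_ne_zero
  rw [hpdf, integral_const_mul] at htotal
  rw [gaussianReal_apply_eq_integral _ one_ne_zero, ENNReal.toReal_ofReal
    (integral_nonneg fun y => gaussianPDFReal_nonneg _ _ _), hpdf, integral_const_mul,
    eq_div_iff (right_ne_zero_of_mul_eq_one htotal), mul_right_comm, htotal, one_mul]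

end Integration

section CentralLimit

open MeasureTheory

/-- The standard deviation of the number of blocks of a uniformly random non-crossing partition of
`[n]`. -/
noncomputable def blockStd (n : ℕ) : ℝ := √(((n : ℝ) ^ 2 - 1) / (4 * (2 * (n : ℝ) - 1)))

lemma succ_div_twelve_le_sq_blockStd {n : ℕ} (hn : 2 ≤ n) :
    ((n : ℝ) + 1) / 12 ≤ blockStd n ^ 2 := by
  have hn : (2 : ℝ) ≤ n := mod_cast hn
  rw [blockStd, Real.sq_sqrt (div_nonneg (by nlinarith) (by linarith)),
    div_le_div_iff₀ (by norm_num) (by linarith)]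
  nlinarith

lemma tendsto_blockStd_div_sqrt :
    Tendsto (fun n : ℕ => blockStd n / √n) atTop (nhds √(1 / 8)) := by
  have hinv : Tendsto (fun n : ℕ => (n : ℝ)⁻¹) atTop (nhds 0) :=
    tendsto_inv_atTop_nhds_zero_nat
  have hlim : Tendsto (fun n : ℕ => (1 - (n : ℝ)⁻¹ ^ 2) / (8 - 4 * (n : ℝ)⁻¹)) atTop
      (nhds (1 / 8)) := by
    have hnum := (hinv.pow 2).const_sub 1
    have hden := (hinv.const_mul 4).const_sub 8
    rw [zero_pow two_ne_zero, sub_zero] at hnum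
    rw [mul_zero, sub_zero] at hden
    exact hnum.div hden (by norm_num)
  refine hlim.sqrt.congr' ?_
  filter_upwards [eventually_gt_atTop 0] with n hn
  have hn : (1 : ℝ) ≤ n := mod_cast hn
  have hden : 8 - 4 * (n : ℝ)⁻¹ = 4 * (2 * n - 1) / n := by field_simp; ring
  rw [blockStd, ← Real.sqrt_div' _ (by linarith), hden]
  congr 1
  field_simp

lemma tendsto_blockStd_atTop : Tendsto blockStd atTop atTop := by
  refine (tendsto_blockStd_div_sqrt.pos_mul_atTop (by positivity)
    tendsto_sqrt_natCast_atTop).congr' ?_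
  filter_upwards [eventually_gt_atTop 0] with n hn
  exact div_mul_cancel₀ _ (by positivity)

lemma tendsto_sub_half_div_sqrt {k : ℕ → ℕ} {y C : ℝ}
    (hk : ∀ᶠ n in atTop, |(k n : ℝ) - n / 2 - y * blockStd n| ≤ C) :
    Tendsto (fun n : ℕ => ((k n : ℝ) - n / 2) / √n) atTop (nhds (y * √(1 / 8))) := by
  have hdev : Tendsto (fun n : ℕ => ((k n : ℝ) - n / 2 - y * blockStd n) / √n) atTop (nhds 0) :=
    tendsto_bdd_div_atTop_nhds_zero (b := -C) (B := C) (hk.mono fun _ h => (abs_le.1 h).1)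
      (hk.mono fun _ h => (abs_le.1 h).2) tendsto_sqrt_natCast_atTop
  have hlim := hdev.add (tendsto_blockStd_div_sqrt.const_mul y)
  rw [zero_add] at hlim
  refine hlim.congr fun n => ?_
  ring

lemma eventually_one_le_ceil (y : ℝ) :
    ∀ᶠ n : ℕ in atTop, 1 ≤ ⌈((n : ℝ) + 1) / 2 + y * blockStd n⌉ := by
  have hlim : Tendsto (fun n : ℕ => y * (blockStd n / √n / √n)) atTop (nhds (y * 0)) :=
    (tendsto_blockStd_div_sqrt.div_atTop tendsto_sqrt_natCast_atTop).const_mul y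
  filter_upwards [hlim.eventually_const_lt (show -(1 / 2) < y * 0 by norm_num),
    eventually_gt_atTop 0] with n hn hpos
  have hpos : (0 : ℝ) < n := mod_cast hpos
  rw [div_div, Real.mul_self_sqrt hpos.le, ← mul_div_assoc, lt_div_iff₀ hpos] at hn
  exact Int.one_le_ceil_iff.2 (by linarith)

/-- The number of non-crossing partitions of `[n]` with `z` blocks, scaled so as to become a
product of two quotients `n.choose k / n.choose (n / 2)`. -/
noncomputable def scaledCount (n : ℕ) (z : ℤ) : ℝ :=
  n / (n.choose (n / 2) : ℝ) ^ 2 *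
    ((Finset.univ : Finset (NCPart n)).filter fun P => (numBlocks P : ℤ) = z).card

lemma scaledCount_succ (n k : ℕ) : scaledCount n (k + 1) =
    (n.choose (k + 1) / n.choose (n / 2) : ℝ) * (n.choose k / n.choose (n / 2)) := by
  have hcount : (n : ℝ) * ((Finset.univ : Finset (NCPart n)).filter (numBlocks · = k + 1)).card =
      n.choose (k + 1) * n.choose k := mod_cast mul_card_numBlocks_eq_succ n k
  rw [div_mul_div_comm, ← hcount, scaledCount, ← sq, div_mul_eq_mul_div]
  norm_cast

lemma scaledCount_of_nonpos {n : ℕ} (hn : 0 < n) {z : ℤ} (hz : z ≤ 0) : scaledCount n z = 0 := by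
  rw [scaledCount, Finset.filter_false_of_mem, Finset.card_empty, Nat.cast_zero, mul_zero]
  rintro P - hP
  have := numBlocks_pos hn P
  omega

lemma tendsto_scaledCount (y : ℝ) :
    Tendsto (fun n : ℕ => scaledCount n ⌈((n : ℝ) + 1) / 2 + y * blockStd n⌉) atTop
      (nhds (Real.exp (-(1 / 2) * y ^ 2))) := by
  set k : ℕ → ℕ := fun n => (⌈((n : ℝ) + 1) / 2 + y * blockStd n⌉ - 1).toNat with hk
  have hceil : ∀ᶠ n : ℕ in atTop, ⌈((n : ℝ) + 1) / 2 + y * blockStd n⌉ = (k n : ℤ) + 1 := by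
    filter_upwards [eventually_one_le_ceil y] with n hn
    rw [hk, Int.toNat_of_nonneg (by linarith), sub_add_cancel]
  have hdev : ∀ᶠ n : ℕ in atTop, 0 ≤ (k n : ℝ) + 1 / 2 - n / 2 - y * blockStd n ∧
      (k n : ℝ) - 1 / 2 - n / 2 - y * blockStd n ≤ 0 := by
    filter_upwards [hceil] with n hn
    obtain ⟨hlt, hle⟩ := Int.ceil_eq_iff.1 hn
    push_cast at hlt hle
    constructor <;> linarith
  have hlim (j : ℕ → ℕ) (hj : ∀ n, j n = k n ∨ j n = k n + 1) :
      Tendsto (fun n : ℕ => (n.choose (j n) / n.choose (n / 2) : ℝ)) atTop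
        (nhds (Real.exp (-2 * (y * √(1 / 8)) ^ 2))) := by
    refine tendsto_choose_div_choose_middle (tendsto_sub_half_div_sqrt (C := 2) ?_)
    filter_upwards [hdev] with n hn
    rw [abs_le]
    rcases hj n with h | h <;> rw [h] <;> push_cast <;> constructor <;> linarith
  have hprod := (hlim (fun n => k n + 1) fun _ => .inr rfl).mul (hlim k fun _ => .inl rfl)
  rw [← Real.exp_add, mul_pow, Real.sq_sqrt (by norm_num),
    show -2 * (y ^ 2 * (1 / 8)) + -2 * (y ^ 2 * (1 / 8)) = -(1 / 2) * y ^ 2 by ring] at hprod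
  refine hprod.congr' ?_
  filter_upwards [hceil] with n hn
  rw [hn, scaledCount_succ]

lemma abs_scaledCount_le {n : ℕ} (hn : 2 ≤ n) (y : ℝ) :
    |scaledCount n ⌈((n : ℝ) + 1) / 2 + y * blockStd n⌉| ≤
      Real.exp 1 * Real.exp (-(1 / 12) * y ^ 2) := by
  set z := ⌈((n : ℝ) + 1) / 2 + y * blockStd n⌉ with hz
  rcases le_or_gt z 0 with hz0 | hz0
  · rw [scaledCount_of_nonpos (by omega) hz0, abs_zero]
    positivity
  obtain ⟨k, hk⟩ : ∃ k : ℕ, z = k + 1 := ⟨(z - 1).toNat, by omega⟩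
  obtain ⟨hlt, hle⟩ := Int.ceil_eq_iff.1 (hz.symm.trans hk)
  push_cast at hlt hle
  have hdev : (y * blockStd n) ^ 2 / 2 - 1 / 4 ≤ ((k : ℝ) - n / 2) ^ 2 := by
    have hsq : ((k : ℝ) - n / 2 - y * blockStd n) ^ 2 ≤ 1 / 4 := by nlinarith
    nlinarith [sq_nonneg (2 * ((k : ℝ) - n / 2) - y * blockStd n)]
  have hexp : 1 / (2 * ((n : ℝ) + 1)) - 2 * ((k : ℝ) - n / 2) ^ 2 / (n + 1) ≤
      1 + -(1 / 12) * y ^ 2 := by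
    have hstd := mul_le_mul_of_nonneg_left (succ_div_twelve_le_sq_blockStd hn) (sq_nonneg y)
    field_simp
    nlinarith
  rw [hk, scaledCount_succ, abs_of_nonneg (by positivity), ← Real.exp_add]
  calc (n.choose (k + 1) / n.choose (n / 2) : ℝ) * (n.choose k / n.choose (n / 2))
      ≤ n.choose k / n.choose (n / 2) :=
        mul_le_of_le_one_left (by positivity) (choose_div_choose_middle_le_one n (k + 1))
    _ ≤ _ := choose_div_choose_middle_le n k
    _ ≤ _ := Real.exp_le_exp.2 hexp

end CentralLimit

/-- Central limit theorem for the number of blocks: with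
`μ_n = (n+1)/2` and `σ_n² = (n² − 1)/(4(2n − 1))`, for every real `x` the probability
`(1/C_n)·#{π ∈ NC(n) : #blocks(π) ≤ μ_n + x σ_n}` converges to `Φ(x)`, the standard
Gaussian cumulative distribution function. -/
theorem numBlocks_CLT (x : ℝ) :
    Tendsto
      (fun n : ℕ =>
        (Nat.card {π : NCPart n //
            (numBlocks π : ℝ) ≤ ((n : ℝ) + 1) / 2 +
              x * Real.sqrt (((n : ℝ) ^ 2 - 1) / (4 * (2 * (n : ℝ) - 1)))} : ℝ) /
          (Fintype.card (NCPart n) : ℝ))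
      atTop
      (nhds (((gaussianReal 0 1) (Set.Iic x)).toReal)) := by
  have hbound : ∀ᶠ n : ℕ in atTop, ∀ y,
      |scaledCount n ⌈((n : ℝ) + 1) / 2 + y * blockStd n⌉| ≤
        Real.exp 1 * Real.exp (-(1 / 12) * y ^ 2) :=
    (eventually_ge_atTop 2).mono fun _ hn => abs_scaledCount_le hn
  have hg : MeasureTheory.Integrable fun y : ℝ => Real.exp 1 * Real.exp (-(1 / 12) * y ^ 2) :=
    (integrable_exp_neg_mul_sq (by norm_num)).const_mul _
  have hf : ∫ y : ℝ, Real.exp (-(1 / 2) * y ^ 2) ≠ 0 := by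
    rw [integral_gaussian]
    positivity
  have hCLT := tendsto_card_le_div_card tendsto_blockStd_atTop tendsto_scaledCount hbound hg hf x
  rw [toReal_gaussianReal_zero_one]
  simpa only [Nat.card_eq_fintype_card, Fintype.card_subtype, Int.cast_natCast, blockStd] using hCLT
end

section
/- Fix integers n ≥ 1 and 1 ≤ l ≤ n. The sum over all non-crossing partitions π of [n] of the number of blocks of π having size exactly l equals the binomial coefficient binom(2n − l − 1, n − 1). Equivalently, the expected number X_n^{(l)} of blocks of size l in a uniformly random NC partition of [n] equals binom(2n − l − 1, n − 1)/C_n = (n/2^{l+1})·Π_{j=0}^{l} (1 + (2 − j)/(2n − j)). -/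
/-!
Record a non-crossing partition of `{0, …, n - 1}` by the word `t` on `ℤ/(n+1)` whose letter
`t(k)` is the size of the block with minimum `k`, or `0` if there is none. The first `i` letters
count the elements whose block starts before `i`; these include all elements below `i`, so
`∑_{j < i} t(j) ≥ i`, and the excess `h(i) = ∑_{j < i} t(j) - i` is the number of elements `≥ i`
of those blocks. Being non-crossing means that the minimum of the block of `x` is the last
`q ≤ x` with `h(q) ≤ h(x+1)`, so the partition can be read off from `t`, and every word of total `n`
with these prefix inequalities arises. By Raney's cycle lemma exactly one of the `n + 1` rotations
of an arbitrary word of total `n` has this property, so a rotation-invariant sum over non-crossing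
partitions is `1/(n+1)` times the same sum over all words, where stars and bars applies.
-/

open Finset

section CyclicWords

variable {N : ℕ} [NeZero N]

lemma sum_range_natCast_zmod {M : Type*} [AddCommMonoid M] (a : ZMod N → M) :
    ∑ j ∈ range N, a j = ∑ k, a k := by
  refine sum_nbij' (fun j ↦ (j : ZMod N)) ZMod.val ?_ ?_ ?_ ?_ ?_
  · simp
  · simp [ZMod.val_lt]
  · exact fun j hj ↦ ZMod.val_cast_of_lt (mem_range.1 hj)
  · simp
  · simp

lemma ext_of_sum_range_natCast_zmod {M : Type*} [AddCancelCommMonoid M] {a b : ZMod N → M}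
    (h : ∀ i ≤ N, ∑ j ∈ range i, a j = ∑ j ∈ range i, b j) : a = b := by
  ext k
  have hlt := ZMod.val_lt k
  have hsucc := h (k.val + 1) hlt
  rw [sum_range_succ, sum_range_succ, h k.val hlt.le, ZMod.natCast_zmod_val] at hsucc
  exact add_left_cancel hsucc

/-- Raney's cycle lemma: the good rotation starts where the partial sums first attain their
minimum. -/
theorem existsUnique_shift_sum_range_nonneg (a : ZMod N → ℤ) (ha : ∑ k, a k = -1) :
    ∃! r : ZMod N, ∀ i < N, 0 ≤ ∑ j ∈ range i, a (r + j) := by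
  let A (m : ℕ) : ℤ := ∑ j ∈ range m, a j
  have sum_shift (m i : ℕ) : ∑ j ∈ range i, a (m + j) = A (m + i) - A m := by
    simp only [A, sum_range_add, Nat.cast_add, add_sub_cancel_left]
  have A_add_period (m : ℕ) : A (m + N) = A m - 1 := by
    have hshift := sum_shift N m
    have hN : A N = -1 := (sum_range_natCast_zmod a).trans ha
    simp only [CharP.cast_eq_zero, zero_add] at hshift
    rw [add_comm m N]
    linarith
  obtain ⟨r, hr, hmin⟩ := exists_min_image (range N) (fun m ↦ toLex (A m, m))
    (nonempty_range_iff.2 (NeZero.ne N))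
  simp only [mem_range, Prod.Lex.toLex_le_toLex] at hr hmin
  refine ⟨r, fun i hi ↦ ?_, fun s hs ↦ ?_⟩
  · rw [sum_shift]
    obtain hlt | hge := lt_or_ge (r + i) N
    · have := hmin _ hlt
      lia
    · obtain ⟨m, hm⟩ := Nat.exists_eq_add_of_le' hge
      have := hmin m (by lia)
      rw [hm, A_add_period]
      lia
  · have hsN := ZMod.val_lt s
    have hs_shift (i : ℕ) (hi : i < N) : A s.val ≤ A (s.val + i) := by
      have := hs i hi
      rwa [← ZMod.natCast_zmod_val s, sum_shift, sub_nonneg] at this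
    have hrs := hmin _ hsN
    suffices s.val = r by rw [← this, ZMod.natCast_zmod_val]
    obtain hlt | rfl | hgt := lt_trichotomy s.val r
    · have := hs_shift (r - s.val) (by lia)
      rw [Nat.add_sub_cancel' hlt.le] at this
      lia
    · rfl
    · have := hs_shift (r + N - s.val) (by lia)
      rw [Nat.add_sub_cancel' (by lia), A_add_period] at this
      lia

end CyclicWords

section PiAntidiag

variable {ι : Type*} [DecidableEq ι]

lemma card_piAntidiag_eq_choose (s : Finset ι) (n : ℕ) :
    #(piAntidiag s n) = (#s + n - 1).choose n := by
  simpa [finsuppAntidiag] using card_finsuppAntidiag_nat_eq_choose (s := s) n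

lemma card_filter_piAntidiag_apply_eq {μ : Type*} [AddCancelCommMonoid μ] [HasAntidiagonal μ]
    [DecidableEq μ] {s : Finset ι} {i : ι} (hi : i ∈ s) (l m : μ) :
    #{f ∈ piAntidiag s (l + m) | f i = l} = #(piAntidiag (s.erase i) m) := by
  refine card_nbij' (Function.update · i 0) (Function.update · i l) ?_ ?_ ?_ ?_
  · intro f hf
    obtain ⟨⟨hsum, hsupp⟩, rfl⟩ := by simpa using hf
    rw [← add_sum_erase s f hi] at hsum
    have hsum' := add_left_cancel hsum
    simp only [mem_coe, mem_piAntidiag]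
    rw [sum_update_of_notMem (notMem_erase i s)]
    exact ⟨hsum', by grind⟩
  · intro f hf
    obtain ⟨hsum, hsupp⟩ := by simpa using hf
    have hsum' : ∑ j ∈ s, Function.update f i l j = l + m := by
      rw [sum_update_of_mem hi, sdiff_singleton_eq_erase, hsum]
    simp only [mem_coe, mem_filter, mem_piAntidiag, Function.update_self, and_true]
    exact ⟨hsum', by grind⟩
  · intro f hf
    simp [(mem_filter.1 hf).2]
  · intro f hf
    have hfi : f i = 0 := by
      have := (mem_piAntidiag.1 hf).2 i
      grind
    simp [hfi]

end PiAntidiag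

section LukasiewiczWords

variable {n : ℕ}

/-- The Łukasiewicz words of total `n`: words on `ℤ/(n+1)` whose prefix sums dominate the prefix
lengths. Indexing the letters by `ℤ/(n+1)` makes rotation of words a translation. -/
def lukasiewiczWords (n : ℕ) : Finset (ZMod (n + 1) → ℕ) :=
  {t ∈ piAntidiag univ n | ∀ i < n + 1, i ≤ ∑ j ∈ range i, t j}

lemma mem_lukasiewiczWords {t : ZMod (n + 1) → ℕ} :
    t ∈ lukasiewiczWords n ↔ ∑ k, t k = n ∧ ∀ i < n + 1, i ≤ ∑ j ∈ range i, t j := by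
  simp [lukasiewiczWords]

lemma existsUnique_shift_mem_lukasiewiczWords {t : ZMod (n + 1) → ℕ} (ht : ∑ k, t k = n) :
    ∃! r, (fun k ↦ t (r + k)) ∈ lukasiewiczWords n := by
  have hsum : ∑ k, ((t k : ℤ) - 1) = -1 := by
    rw [sum_sub_distrib, ← Nat.cast_sum, ht]
    simp
  have hshift (r : ZMod (n + 1)) : ∑ k, t (r + k) = n := by
    exact (Equiv.sum_comp (Equiv.addLeft r) t).trans ht
  convert! existsUnique_shift_sum_range_nonneg _ hsum using 2 with r
  simp only [mem_lukasiewiczWords, hshift, true_and, sum_sub_distrib, sum_const, card_range,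
    nsmul_eq_mul, mul_one, sub_nonneg]
  norm_cast

lemma sum_piAntidiag_univ_eq_nsmul_sum_lukasiewiczWords {M : Type*} [AddCommMonoid M]
    (f : (ZMod (n + 1) → ℕ) → M) (hf : ∀ t r, f (fun k ↦ t (r + k)) = f t) :
    ∑ t ∈ piAntidiag univ n, f t = (n + 1) • ∑ t ∈ lukasiewiczWords n, f t := by
  classical
  have hrot (r : ZMod (n + 1)) :
      ∑ t ∈ piAntidiag univ n, (if (fun k ↦ t (r + k)) ∈ lukasiewiczWords n then f t else 0) =
        ∑ t ∈ lukasiewiczWords n, f t := by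
    rw [← sum_filter]
    refine sum_nbij' (fun t k ↦ t (r + k)) (fun t k ↦ t (-r + k)) ?_ ?_ ?_ ?_ ?_
    · exact fun t ht ↦ (mem_filter.1 ht).2
    · intro t ht
      have := Equiv.sum_comp (Equiv.addLeft (-r)) t
      simp_all [mem_lukasiewiczWords]
    · simp
    · simp
    · simp [hf]
  calc
    ∑ t ∈ piAntidiag univ n, f t
      = ∑ t ∈ piAntidiag univ n, ∑ r, if (fun k ↦ t (r + k)) ∈ lukasiewiczWords n then f t else 0 :=
        sum_congr rfl fun t ht ↦ by
          obtain ⟨r, hr, huniq⟩ :=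
            existsUnique_shift_mem_lukasiewiczWords (t := t) (by simpa using ht)
          rw [Fintype.sum_eq_single r (fun s hs ↦ if_neg (mt (huniq s) hs)), if_pos hr]
    _ = (n + 1) • ∑ t ∈ lukasiewiczWords n, f t := by
        rw [sum_comm, Fintype.sum_congr _ _ hrot, sum_const, card_univ, ZMod.card]

lemma succ_mul_card_lukasiewiczWords : (n + 1) * #(lukasiewiczWords n) = n.centralBinom := by
  have h := sum_piAntidiag_univ_eq_nsmul_sum_lukasiewiczWords (n := n) (fun _ ↦ 1) (fun _ _ ↦ rfl)
  rw [← card_eq_sum_ones, ← card_eq_sum_ones, card_piAntidiag_eq_choose, card_univ, ZMod.card,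
    smul_eq_mul] at h
  rw [← h, Nat.centralBinom]
  congr 1
  lia

lemma card_lukasiewiczWords : #(lukasiewiczWords n) = catalan n :=
  Nat.eq_of_mul_eq_mul_left n.succ_pos <|
    succ_mul_card_lukasiewiczWords.trans (succ_mul_catalan_eq_centralBinom n).symm

lemma sum_card_filter_eq_lukasiewiczWords {l : ℕ} (hl : l ≤ n) :
    ∑ t ∈ lukasiewiczWords n, #{k | t k = l} = (2 * n - l - 1).choose (n - 1) := by
  refine Nat.eq_of_mul_eq_mul_left n.succ_pos ?_
  calc
    (n + 1) * ∑ t ∈ lukasiewiczWords n, #{k | t k = l}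
      = ∑ t ∈ piAntidiag (univ : Finset (ZMod (n + 1))) n, #{k | t k = l} := by
        rw [sum_piAntidiag_univ_eq_nsmul_sum_lukasiewiczWords, smul_eq_mul]
        exact fun t r ↦ card_equiv (Equiv.addLeft r) (by simp)
    _ = ∑ k : ZMod (n + 1), #{t ∈ piAntidiag univ n | t k = l} :=
        sum_card_bipartiteAbove_eq_sum_card_bipartiteBelow _
    _ = (n + 1) * (2 * n - l - 1).choose (n - 1) := by
        obtain ⟨m, rfl⟩ := Nat.exists_eq_add_of_le hl
        have hsymm : l + m + m - 1 = m + (l + m - 1) := by lia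
        simp only [card_filter_piAntidiag_apply_eq (mem_univ _), card_piAntidiag_eq_choose,
          card_erase_of_mem (mem_univ _), card_univ, ZMod.card, sum_const, smul_eq_mul,
          Nat.add_sub_cancel]
        rw [Nat.choose_symm_of_eq_add hsymm]
        congr 2
        lia

end LukasiewiczWords

section ClosedForm

lemma centralBinom_succ_eq_two_mul_choose (n : ℕ) :
    (n + 1).centralBinom = 2 * (2 * n + 1).choose n := by
  rw [Nat.centralBinom_eq_two_mul_choose, mul_add_one, Nat.choose_succ_succ',
    Nat.choose_symm_half, ← two_mul]

lemma choose_mul_two_mul_sub {n l : ℕ} (hl : l < n) :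
    ((2 * n - (l + 1) - 1).choose (n - 1) : ℚ) * (2 * n - (l + 1)) =
      (2 * n - l - 1).choose (n - 1) * (n - l) := by
  obtain ⟨m, rfl⟩ := Nat.exists_eq_add_of_lt hl
  have hcompl : l + 2 * m + 1 - (l + m) = m + 1 := by lia
  have habsorb : ((l + 2 * m).choose (l + m) : ℚ) * (l + 2 * m + 1) =
      (l + 2 * m + 1).choose (l + m) * (m + 1) := by
    exact_mod_cast hcompl ▸ Nat.choose_mul_succ_eq (l + 2 * m) (l + m)
  rw [show 2 * (l + m + 1) - (l + 1) - 1 = l + 2 * m by lia,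
    show 2 * (l + m + 1) - l - 1 = l + 2 * m + 1 by lia, Nat.add_sub_cancel]
  push_cast
  linear_combination habsorb

lemma choose_eq_catalan_mul_prod {n l : ℕ} (hn : 1 ≤ n) (hl : l ≤ n) :
    ((2 * n - l - 1).choose (n - 1) : ℚ) = catalan n * ((n / 2 ^ (l + 1)) *
      ∏ j ∈ range (l + 1), (1 + (2 - (j : ℚ)) / (2 * (n : ℚ) - (j : ℚ)))) := by
  induction l with
  | zero =>
    obtain ⟨m, rfl⟩ := Nat.exists_eq_add_of_le' hn
    have hcat : ((m : ℚ) + 1 + 1) * catalan (m + 1) = 2 * (2 * m + 1).choose m := by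
      exact_mod_cast (succ_mul_catalan_eq_centralBinom (m + 1)).trans
        (centralBinom_succ_eq_two_mul_choose m)
    rw [show 2 * (m + 1) - 0 - 1 = 2 * m + 1 by lia, Nat.add_sub_cancel, zero_add, pow_one,
      prod_range_one]
    push_cast
    rw [sub_zero, sub_zero]
    field_simp
    linear_combination -hcat
  | succ l ih =>
    have hden : (2 * n - (l + 1) : ℚ) ≠ 0 := by
      have : (l + 1 : ℚ) ≤ n := by exact_mod_cast hl
      linarith [(by positivity : (0 : ℚ) ≤ l)]
    refine mul_right_cancel₀ hden ?_
    rw [choose_mul_two_mul_sub hl, ih (Nat.le_of_succ_le hl), prod_range_succ _ (l + 1)]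
    generalize ∏ j ∈ range (l + 1), (1 + (2 - (j : ℚ)) / (2 * (n : ℚ) - j)) = p
    have hfactor : (1 + (2 - ((l + 1 : ℕ) : ℚ)) / (2 * n - ((l + 1 : ℕ) : ℚ))) * (2 * n - (l + 1)) =
        2 * (n - l) := by
      push_cast
      field_simp
      ring
    rw [pow_succ 2 (l + 1)]
    linear_combination -(catalan n * (n / (2 ^ (l + 1) * 2)) * p) * hfactor

end ClosedForm

section LastDip

/-- The last `q ≤ x` with `h q ≤ h (x + 1)`. When `h` is the excess of the word of a non-crossing
partition, this is the minimum of the block of `x`. If there is no such `q`, the value is `0`; for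
`h 0 = 0` this does not happen. -/
def lastDip (h : ℕ → ℕ) (x : ℕ) : ℕ :=
  Nat.findGreatest (fun q ↦ h q ≤ h (x + 1)) x

lemma lastDip_le (h : ℕ → ℕ) (x : ℕ) : lastDip h x ≤ x :=
  Nat.findGreatest_le x

lemma lt_of_lastDip_lt {h : ℕ → ℕ} {x r : ℕ} (hr : lastDip h x < r) (hrx : r ≤ x) :
    h (x + 1) < h r :=
  not_le.1 (Nat.findGreatest_is_greatest (P := fun q ↦ h q ≤ h (x + 1)) hr hrx)

lemma exists_first_passage {h : ℕ → ℕ} {n i v : ℕ} (hn : h n = 0)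
    (hstep : ∀ i < n, h i ≤ h (i + 1) + 1) (hi : i ≤ n) (hv : v < h i) :
    ∃ x < n, i ≤ x ∧ h (x + 1) = v ∧ ∀ r, i ≤ r → r ≤ x → v < h r := by
  have hex : ∃ m, i ≤ m ∧ h m ≤ v := ⟨n, hi, hn.trans_le v.zero_le⟩
  obtain ⟨him, hmv⟩ := Nat.find_spec hex
  have hmn : Nat.find hex ≤ n := Nat.find_min' hex ⟨hi, hn.trans_le v.zero_le⟩
  have habove (r : ℕ) (hir : i ≤ r) (hr : r < Nat.find hex) : v < h r :=
    not_le.1 fun hle ↦ Nat.find_min hex hr ⟨hir, hle⟩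
  generalize Nat.find hex = m at him hmv hmn habove
  have hlt : i < m := him.lt_of_ne (by rintro rfl; exact hv.not_ge hmv)
  obtain ⟨x, rfl⟩ := Nat.exists_eq_succ_of_ne_zero hlt.ne_bot
  have := habove x (by lia) (by lia)
  have := hstep x hmn
  exact ⟨x, hmn, by lia, by lia, fun r hir hrx ↦ habove r hir (by lia)⟩

variable {h : ℕ → ℕ} (h0 : h 0 = 0)
include h0

lemma apply_lastDip_le (x : ℕ) : h (lastDip h x) ≤ h (x + 1) :=
  Nat.findGreatest_spec (P := fun q ↦ h q ≤ h (x + 1)) x.zero_le (h0.trans_le (Nat.zero_le _))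

lemma lastDip_lastDip (x : ℕ) : lastDip h (lastDip h x) = lastDip h x := by
  by_contra hne
  have hlt := (lastDip_le h (lastDip h x)).lt_of_ne hne
  have hfall := lt_of_lastDip_lt hlt le_rfl
  have hdip := apply_lastDip_le h0 x
  obtain heq | hlt' := (lastDip_le h x).eq_or_lt
  · rw [heq] at hfall hdip
    lia
  · have := lt_of_lastDip_lt (Nat.lt_succ_self (lastDip h x)) hlt'
    lia

lemma lastDip_eq_of_crossing {a b c d : ℕ} (hab : a < b) (hbc : b < c) (hcd : c < d)
    (hac : lastDip h a = lastDip h c) (hbd : lastDip h b = lastDip h d) :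
    lastDip h a = lastDip h b := by
  have ha := lastDip_le h a
  have hb := lastDip_le h b
  have hc := apply_lastDip_le h0 c
  have hd := apply_lastDip_le h0 d
  obtain hlt | heq | hgt := lt_trichotomy (lastDip h a) (lastDip h b)
  · have hcq := lt_of_lastDip_lt (hac ▸ hlt) (hb.trans hbc.le)
    have hdc := lt_of_lastDip_lt (h := h) (x := d) (r := c + 1) (by lia) hcd
    rw [← hbd] at hd
    lia
  · exact heq
  · have hbq := lt_of_lastDip_lt hgt (ha.trans hab.le)
    have hcb := lt_of_lastDip_lt (h := h) (x := c) (r := b + 1) (by lia) hbc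
    rw [← hac] at hc
    lia

lemma card_lastDip_lt_le {n : ℕ} (hn : h n = 0) (hstep : ∀ i < n, h i ≤ h (i + 1) + 1) {i : ℕ}
    (hi : i ≤ n) : #{x : Fin n | lastDip h x < i ∧ i ≤ x} = h i := by
  have hanti {x y : ℕ} (hy : lastDip h y < i) (hx : i ≤ x) (hxy : x < y) : h (y + 1) < h (x + 1) :=
    lt_of_lastDip_lt (by lia) hxy
  rw [← card_range (h i)]
  refine card_bij (fun x _ ↦ h (x + 1)) ?_ ?_ ?_
  · intro x hx
    obtain ⟨hdip, hix⟩ := (mem_filter.1 hx).2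
    exact mem_range.2 (lt_of_lastDip_lt hdip hix)
  · intro x hx y hy hxy
    obtain ⟨hdipx, hix⟩ := (mem_filter.1 hx).2
    obtain ⟨hdipy, hiy⟩ := (mem_filter.1 hy).2
    obtain hlt | heq | hgt := lt_trichotomy x y
    · exact absurd hxy (hanti hdipy hix hlt).ne'
    · exact heq
    · exact absurd hxy (hanti hdipx hiy hgt).ne
  · intro v hv
    obtain ⟨x, hxn, hix, hxv, habove⟩ := exists_first_passage hn hstep hi (mem_range.1 hv)
    have hdip := apply_lastDip_le h0 x
    refine ⟨⟨x, hxn⟩, mem_filter.2 ⟨mem_univ _, not_le.1 fun hle ↦ ?_, hix⟩, hxv⟩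
    exact (habove _ hle (lastDip_le h x)).not_ge (hxv ▸ hdip)

end LastDip

section BlockMin

lemma mem_parts_iff_exists_part_eq {α : Type*} [DecidableEq α] {s : Finset α} (P : Finpartition s)
    {B : Finset α} : B ∈ P.parts ↔ ∃ x ∈ s, P.part x = B := by
  refine ⟨fun hB ↦ P.part_surjOn hB, ?_⟩
  rintro ⟨x, hx, rfl⟩
  exact P.part_mem.2 hx

variable {α : Type*} [LinearOrder α] [Fintype α] (P : Finpartition (univ : Finset α))

/-- The smallest element of the block of `x`. -/
def blockMin (x : α) : α :=
  (P.part x).min' ⟨x, P.mem_part (mem_univ x)⟩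

lemma blockMin_le (x : α) : blockMin P x ≤ x :=
  min'_le _ _ (P.mem_part (mem_univ x))

lemma blockMin_mem_part (x : α) : blockMin P x ∈ P.part x :=
  min'_mem _ _

lemma part_blockMin (x : α) : P.part (blockMin P x) = P.part x :=
  (P.mem_part_iff_part_eq_part (mem_univ _) (mem_univ _)).1 (blockMin_mem_part P x)

lemma blockMin_eq_blockMin_iff {x y : α} : blockMin P x = blockMin P y ↔ P.part x = P.part y := by
  refine ⟨fun h ↦ ?_, fun h ↦ by simp only [blockMin, h]⟩
  rw [← part_blockMin, h, part_blockMin]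

lemma blockMin_blockMin (x : α) : blockMin P (blockMin P x) = blockMin P x := by
  rw [blockMin_eq_blockMin_iff, part_blockMin]

lemma mem_part_iff_blockMin_eq {x y : α} : y ∈ P.part x ↔ blockMin P y = blockMin P x := by
  rw [blockMin_eq_blockMin_iff, P.mem_part_iff_part_eq_part (mem_univ _) (mem_univ _)]

variable {P} in
lemma eq_of_blockMin_eq {Q : Finpartition (univ : Finset α)}
    (h : ∀ x, blockMin P x = blockMin Q x) : P = Q := by
  have hpart (x : α) : P.part x = Q.part x := by
    ext y
    simp only [mem_part_iff_blockMin_eq, h]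
  ext B
  simp only [mem_parts_iff_exists_part_eq, hpart]

end BlockMin

section BlockSizeWord

variable {n : ℕ} (P : Finpartition (univ : Finset (Fin n)))

lemma isNonCrossing_iff_blockMin : IsNonCrossing P ↔ ∀ a b c d : Fin n, a < b → b < c → c < d →
    blockMin P a = blockMin P c → blockMin P b = blockMin P d → blockMin P a = blockMin P b := by
  simp only [blockMin_eq_blockMin_iff]
  refine ⟨fun hP a b c d hab hbc hcd hac hbd ↦ ?_,
    fun hP a b c d hab hbc hcd B hB B' hB' ha hc hb hd ↦ ?_⟩
  · exact hP a b c d hab hbc hcd _ (P.part_mem.2 (mem_univ a)) _ (P.part_mem.2 (mem_univ b))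
      (P.mem_part (mem_univ a)) (hac ▸ P.mem_part (mem_univ c)) (P.mem_part (mem_univ b))
      (hbd ▸ P.mem_part (mem_univ d))
  · rw [← P.part_eq_of_mem hB ha, ← P.part_eq_of_mem hB' hb]
    refine hP a b c d hab hbc hcd ?_ ?_
    · rw [P.part_eq_of_mem hB ha, P.part_eq_of_mem hB hc]
    · rw [P.part_eq_of_mem hB' hb, P.part_eq_of_mem hB' hd]

variable {P} in
lemma blockMin_le_blockMin (hP : IsNonCrossing P) {x y : Fin n} (hxy : blockMin P x ≤ y)
    (hyx : y ≤ x) : blockMin P x ≤ blockMin P y := by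
  obtain rfl | hxy := hxy.eq_or_lt
  · rw [blockMin_blockMin]
  obtain rfl | hyx := hyx.eq_or_lt
  · rfl
  by_contra! hlt
  have hmin := (isNonCrossing_iff_blockMin P).1 hP _ _ _ _ hlt hxy hyx
    (blockMin_blockMin P y) (blockMin_blockMin P x)
  simp only [blockMin_blockMin] at hmin
  exact hlt.ne hmin

/-- The block of `P` with minimum `k`, or `∅` if no block has minimum `k`; in particular it is `∅`
at `k = n`, the position added to `Fin n` so that `n + 1` rotations are available. -/
def blockWithMin (k : ZMod (n + 1)) : Finset (Fin n) :=
  {x | ((blockMin P x).val : ZMod (n + 1)) = k}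

variable {P} in
lemma mem_blockWithMin {k : ZMod (n + 1)} {x : Fin n} :
    x ∈ blockWithMin P k ↔ ((blockMin P x).val : ZMod (n + 1)) = k := by
  simp [blockWithMin]

lemma mem_blockWithMin_natCast {j : ℕ} (hj : j < n + 1) {x : Fin n} :
    x ∈ blockWithMin P j ↔ (blockMin P x).val = j := by
  rw [mem_blockWithMin]
  exact (CharP.natCast_injOn_Iio (ZMod (n + 1)) (n + 1)).eq_iff
    (Nat.lt_succ_of_lt (blockMin P x).isLt) hj

lemma blockWithMin_blockMin (x : Fin n) : blockWithMin P (blockMin P x).val = P.part x := by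
  ext y
  rw [mem_blockWithMin_natCast P (by lia), Fin.val_inj, mem_part_iff_blockMin_eq]

/-- The word recording the sizes of the blocks of `P` at the positions of their minima. -/
def blockSizeWord (k : ZMod (n + 1)) : ℕ :=
  #(blockWithMin P k)

lemma sum_range_blockSizeWord {i : ℕ} (hi : i ≤ n + 1) :
    ∑ j ∈ range i, blockSizeWord P j = #{x | (blockMin P x).val < i} := by
  rw [card_eq_sum_card_fiberwise (f := fun x ↦ (blockMin P x).val) (t := range i)
    fun x hx ↦ by simpa using hx]
  refine sum_congr rfl fun j hj ↦ ?_
  have hji := mem_range.1 hj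
  rw [blockSizeWord]
  congr 1 with x
  grind [mem_blockWithMin_natCast]

/-- The elements `x ≥ i` of the blocks which start before `i`. -/
def openElements (i : ℕ) : Finset (Fin n) := {x | (blockMin P x).val < i ∧ i ≤ (x : ℕ)}

variable {P} in
lemma mem_openElements {i : ℕ} {x : Fin n} :
    x ∈ openElements P i ↔ (blockMin P x).val < i ∧ i ≤ (x : ℕ) := by
  simp [openElements]

lemma card_openElements_add {i : ℕ} (hi : i ≤ n) :
    #(openElements P i) + i = ∑ j ∈ range i, blockSizeWord P j := by
  have hsplit : ({x | (blockMin P x).val < i} : Finset (Fin n)) =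
      openElements P i ∪ ({x | (x : ℕ) < i} : Finset (Fin n)) := by
    ext x
    have := Fin.le_def.1 (blockMin_le P x)
    simp only [mem_union, mem_filter, mem_univ, true_and, mem_openElements]
    lia
  have hdisj : Disjoint (openElements P i) ({x | (x : ℕ) < i} : Finset (Fin n)) :=
    disjoint_left.2 fun x hx hxi ↦
      (mem_openElements.1 hx).2.not_gt (by simpa using hxi)
  rw [sum_range_blockSizeWord P (by lia), hsplit, card_union_of_disjoint hdisj,
    Fin.card_filter_val_lt, min_eq_right hi]

lemma blockSizeWord_mem_lukasiewiczWords : blockSizeWord P ∈ lukasiewiczWords n := by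
  refine mem_lukasiewiczWords.2 ⟨?_, fun i hi ↦ ?_⟩
  · rw [← sum_range_natCast_zmod, sum_range_blockSizeWord P le_rfl,
      filter_true_of_mem fun x _ ↦ (blockMin P x).isLt.trans n.lt_succ_self, card_univ,
      Fintype.card_fin]
  · rw [← card_openElements_add P (Nat.le_of_lt_succ hi)]
    exact Nat.le_add_left i _

/-- The height after `i` steps of the lattice path with steps `t j - 1`. The subtraction does not
truncate when `t` is a Łukasiewicz word and `i ≤ n`. -/
def excess (t : ZMod (n + 1) → ℕ) (i : ℕ) : ℕ := ∑ j ∈ range i, t j - i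

lemma excess_blockSizeWord {i : ℕ} (hi : i ≤ n) :
    excess (blockSizeWord P) i = #(openElements P i) := by
  rw [excess, ← card_openElements_add P hi, Nat.add_sub_cancel]

variable {P}

lemma openElements_blockMin_subset (hP : IsNonCrossing P) (x : Fin n) :
    openElements P (blockMin P x).val ⊆ openElements P (x + 1) := by
  intro y hy
  rw [mem_openElements] at hy ⊢
  obtain ⟨hstart, hy⟩ := hy
  have hmin := Fin.le_def.1 (blockMin_le P x)
  refine ⟨by lia, not_lt.1 fun hlt ↦ hstart.not_ge ?_⟩
  exact blockMin_le_blockMin hP hy (Nat.le_of_lt_succ hlt)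

lemma openElements_succ_ssubset (hP : IsNonCrossing P) {x : Fin n} {r : ℕ}
    (hr : (blockMin P x).val < r) (hrx : r ≤ x) : openElements P (x + 1) ⊂ openElements P r := by
  refine (ssubset_iff_of_subset fun y hy ↦ ?_).2
    ⟨x, mem_openElements.2 ⟨hr, hrx⟩, fun hx ↦ (mem_openElements.1 hx).2.not_gt x.val.lt_succ_self⟩
  rw [mem_openElements] at hy ⊢
  obtain ⟨hstart, hxy⟩ := hy
  refine ⟨lt_of_le_of_lt ?_ hr, by lia⟩
  exact blockMin_le_blockMin hP (Nat.le_of_lt_succ hstart) (Nat.le_of_succ_le hxy)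

lemma lastDip_excess_blockSizeWord (hP : IsNonCrossing P) (x : Fin n) :
    lastDip (excess (blockSizeWord P)) x = (blockMin P x).val := by
  have hmin := Fin.le_def.1 (blockMin_le P x)
  rw [lastDip, Nat.findGreatest_eq_iff]
  refine ⟨hmin, fun _ ↦ ?_, fun r hr hrx ↦ ?_⟩
  · rw [excess_blockSizeWord P (by lia), excess_blockSizeWord P (by lia)]
    exact card_le_card (openElements_blockMin_subset hP x)
  · rw [excess_blockSizeWord P (by lia), excess_blockSizeWord P (by lia), not_le]
    exact card_lt_card (openElements_succ_ssubset hP hr hrx)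

lemma eq_of_blockSizeWord_eq {Q : Finpartition (univ : Finset (Fin n))} (hP : IsNonCrossing P)
    (hQ : IsNonCrossing Q) (h : blockSizeWord P = blockSizeWord Q) : P = Q :=
  eq_of_blockMin_eq fun x ↦ Fin.ext <| by
    rw [← lastDip_excess_blockSizeWord hP, ← lastDip_excess_blockSizeWord hQ, h]

end BlockSizeWord

section LastDipPartition

variable {n : ℕ}

open Classical in
/-- The partition of `Fin n` with `x` and `y` in the same block iff `lastDip h x = lastDip h y`.
It inverts `blockSizeWord` when `h` is the excess of a Łukasiewicz word. -/
noncomputable def lastDipPartition (n : ℕ) (h : ℕ → ℕ) : Finpartition (univ : Finset (Fin n)) :=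
  Finpartition.ofSetoid (Setoid.ker fun x : Fin n ↦ lastDip h x)

lemma mem_part_lastDipPartition {h : ℕ → ℕ} {x y : Fin n} :
    y ∈ (lastDipPartition n h).part x ↔ lastDip h x = lastDip h y := by
  classical
  exact Finpartition.mem_part_ofSetoid_iff_rel

lemma blockMin_lastDipPartition {h : ℕ → ℕ} (h0 : h 0 = 0) (x : Fin n) :
    (blockMin (lastDipPartition n h) x).val = lastDip h x := by
  refine le_antisymm ?_ ?_
  · have hlt : lastDip h x < n := (lastDip_le h x).trans_lt x.isLt
    exact Fin.le_def.1 <| min'_le _ (⟨lastDip h x, hlt⟩ : Fin n) <|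
      mem_part_lastDipPartition.2 (lastDip_lastDip h0 x).symm
  · rw [mem_part_lastDipPartition.1 (blockMin_mem_part _ x)]
    exact lastDip_le h _

lemma isNonCrossing_lastDipPartition {h : ℕ → ℕ} (h0 : h 0 = 0) :
    IsNonCrossing (lastDipPartition n h) := by
  simp only [isNonCrossing_iff_blockMin, ← Fin.val_inj, blockMin_lastDipPartition h0]
  exact fun a b c d ↦ lastDip_eq_of_crossing h0

variable {t : ZMod (n + 1) → ℕ} (ht : t ∈ lukasiewiczWords n)
include ht

lemma excess_add_of_mem_lukasiewiczWords {i : ℕ} (hi : i ≤ n) :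
    excess t i + i = ∑ j ∈ range i, t j :=
  Nat.sub_add_cancel ((mem_lukasiewiczWords.1 ht).2 i (Nat.lt_succ_of_le hi))

lemma blockSizeWord_lastDipPartition_excess :
    blockSizeWord (lastDipPartition n (excess t)) = t := by
  have h0 : excess t 0 = 0 := by simp [excess]
  have htotal : ∑ j ∈ range (n + 1), t j = n :=
    (sum_range_natCast_zmod t).trans (mem_lukasiewiczWords.1 ht).1
  have hn : excess t n = 0 := by
    rw [sum_range_succ] at htotal
    exact Nat.sub_eq_zero_of_le (by lia)
  have hstep (i : ℕ) (hi : i < n) : excess t i ≤ excess t (i + 1) + 1 := by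
    have := excess_add_of_mem_lukasiewiczWords ht hi.le
    have := excess_add_of_mem_lukasiewiczWords ht (Nat.succ_le_of_lt hi)
    rw [sum_range_succ] at this
    lia
  refine ext_of_sum_range_natCast_zmod fun i hi ↦ ?_
  obtain rfl | hlt := hi.eq_or_lt
  · rw [htotal, sum_range_natCast_zmod]
    exact (mem_lukasiewiczWords.1 (blockSizeWord_mem_lukasiewiczWords _)).1
  · have hin := Nat.le_of_lt_succ hlt
    rw [← card_openElements_add _ hin, ← excess_add_of_mem_lukasiewiczWords ht hin,
      ← card_lastDip_lt_le h0 hn hstep hin]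
    simp only [openElements, blockMin_lastDipPartition h0]

end LastDipPartition

section NonCrossingPartitions

variable {n : ℕ}

lemma sum_ncPart_eq_sum_lukasiewiczWords {M : Type*} [AddCommMonoid M]
    (f : (ZMod (n + 1) → ℕ) → M) :
    ∑ π : NCPart n, f (blockSizeWord π.1) = ∑ t ∈ lukasiewiczWords n, f t := by
  refine sum_bij (fun π _ ↦ blockSizeWord π.1) (fun π _ ↦ blockSizeWord_mem_lukasiewiczWords π.1)
    (fun π _ ρ _ h ↦ Subtype.ext (eq_of_blockSizeWord_eq π.2 ρ.2 h)) (fun t ht ↦ ?_)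
    (fun _ _ ↦ rfl)
  exact ⟨⟨lastDipPartition n (excess t), isNonCrossing_lastDipPartition (by simp [excess])⟩,
    mem_univ _, blockSizeWord_lastDipPartition_excess ht⟩

lemma card_ncPart : Fintype.card (NCPart n) = catalan n := by
  rw [← card_lukasiewiczWords, Fintype.card_eq_sum_ones, card_eq_sum_ones]
  exact sum_ncPart_eq_sum_lukasiewiczWords fun _ ↦ 1

lemma numBlocksOfSize_eq_card_blockSizeWord {l : ℕ} (hl : 1 ≤ l) (π : NCPart n) :
    numBlocksOfSize l π = #{k | blockSizeWord π.1 k = l} := by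
  obtain ⟨P, hP⟩ := π
  have hmin {k : ZMod (n + 1)} (hk : blockSizeWord P k = l) :
      ∃ x, ((blockMin P x).val : ZMod (n + 1)) = k := by
    obtain ⟨x, hx⟩ := card_pos.1 (hl.trans_eq hk.symm)
    exact ⟨x, mem_blockWithMin.1 hx⟩
  refine (card_bij (fun k _ ↦ blockWithMin P k) ?_ ?_ ?_).symm
  · intro k hk
    have hsize := (mem_filter.1 hk).2
    obtain ⟨x, rfl⟩ := hmin hsize
    refine mem_filter.2 ⟨?_, hsize⟩
    exact (mem_parts_iff_exists_part_eq P).2 ⟨x, mem_univ x, (blockWithMin_blockMin P x).symm⟩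
  · intro k hk k' _ hkk'
    obtain ⟨x, rfl⟩ := hmin (mem_filter.1 hk).2
    exact mem_blockWithMin.1 (hkk' ▸ mem_blockWithMin.2 rfl)
  · intro B hB
    obtain ⟨hmem, hcard⟩ := mem_filter.1 hB
    obtain ⟨x, -, rfl⟩ := (mem_parts_iff_exists_part_eq P).1 hmem
    have hblock := blockWithMin_blockMin P x
    refine ⟨((blockMin P x).val : ZMod (n + 1)), mem_filter.2 ⟨mem_univ _, ?_⟩, hblock⟩
    rw [blockSizeWord, hblock, hcard]

end NonCrossingPartitions

/-- For `n ≥ 1` and `1 ≤ l ≤ n`, the sum over all non-crossing partitions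
`π` of `[n]` of the number of blocks of `π` of size exactly `l` equals
`binom(2n − l − 1, n − 1)`; equivalently, the expected number of blocks of size `l` in a
uniformly random NC partition of `[n]` is
`binom(2n − l − 1, n − 1)/C_n = (n/2^{l+1})·Π_{j=0}^{l} (1 + (2 − j)/(2n − j))`. -/
theorem sum_numBlocksOfSize (n l : ℕ) (hn : 1 ≤ n) (hl : 1 ≤ l) (hln : l ≤ n) :
    (∑ π : NCPart n, numBlocksOfSize l π = Nat.choose (2 * n - l - 1) (n - 1)) ∧
    ((∑ π : NCPart n, (numBlocksOfSize l π : ℚ)) / (Fintype.card (NCPart n) : ℚ) =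
      ((n : ℚ) / 2 ^ (l + 1)) *
        ∏ j ∈ Finset.range (l + 1), (1 + (2 - (j : ℚ)) / (2 * (n : ℚ) - (j : ℚ)))) := by
  have htotal : ∑ π : NCPart n, numBlocksOfSize l π = (2 * n - l - 1).choose (n - 1) := by
    simp only [numBlocksOfSize_eq_card_blockSizeWord hl]
    exact (sum_ncPart_eq_sum_lukasiewiczWords fun t ↦ Finset.card {k | t k = l}).trans
      (sum_card_filter_eq_lukasiewiczWords hln)
  refine ⟨htotal, ?_⟩
  have hcatalan : (catalan n : ℚ) ≠ 0 := by
    have := (succ_mul_catalan_eq_centralBinom n).trans_ne n.centralBinom_ne_zero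
    exact_mod_cast right_ne_zero_of_mul this
  rw [← Nat.cast_sum, htotal, card_ncPart, choose_eq_catalan_mul_prod hn hln,
    mul_div_cancel_left₀ _ hcatalan]
end
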